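/- arXiv:2107.11804 — 3 statements merged into one kernel-verified Lean document; each statement's English description precedes it below -/
import Mathlib

section
/- Let K be the special inter-arrival law with exponent α = 1/2, with pinning partition function Z_{N,h}, and let p ∈ (0,1). Define f̃_p : ℝ → ℝ by f̃_p(h) := ∑_{n=1}^∞ p^{n−1}·log Z_{n,h} (the series converges absolutely for every real h, since e^h·K(n) ≤ Z_{n,h} ≤ e^{n·max(h,0)}). Then f̃_p is infinitely differentiable on ℝ, f̃_p is real-analytic at every h ≠ 0, and f̃_p is not real-analytic at h = 0 (a Griffiths singularity of the reduced disordered pinning model). -/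
/-!
For `α = 1/2` the law has generating series `u = 1 - √(1 - X)`, a root of `u² = 2u - X`. Writing
`w = e^h`, the partition function is a polynomial `Z_N(w)`, and the quadratic equation for `u` becomes
the two-term recursion `(2w - 1) Z_{N+1} = w² Z_N - w K(N+1)` (`polyZ_rec`). In terms of
`q = (2w - 1) / w²` it has the explicit solution `polyZ_iter`:
`w Z_N q^{N+1} = 2 - 1/w - ∑_{j ≤ N} K(j) q^j`. The coordinate `v` given by `w = 1/(1+v)`, in which
`q = 1 - v²`, puts the critical point `h = 0` at `v = 0`.

*Analyticity off `0`.* A point `h` is called `Good` if near it all `log Z_n` have holomorphic branches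
growing at most linearly in `n`; then `∑ p^n log |Z_{n+1}|`, called `potU`, is locally the real part of a
holomorphic function. Negative `h` are `Good` because `Z_N ~ K(N) w / (1 - w)²` uniformly near `w`
(`asymAt_of_norm_lt`), and positive `h` because `Z_N` is comparable to `q^{-N}` (`good_pos`).

*Smoothness.* Derivatives of `log Z_n` are polynomials in the moments of the number of contacts,
which is at most `n`. They are therefore bounded by powers of `n`, uniformly in `h`, and the weights
`p^n` make all differentiated series converge (`contDiff_potU`).

*Singularity at `0`.* The points `v` and `-v` share the same `q`. Comparing the explicit solution at
both, with the known asymptotics at the one with positive real part, produces zeros `v1` of some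
`Z_N` arbitrarily close to `0`, with `|1 - v1²| > 1` (`exists_zero_near`). Suppose the function were
analytic at `0`, with holomorphic extension `F`. Follow the arc of the circle `|v| = |v1|` from the
positive axis to `v1`. At every point of the arc where no `Z_n` vanishes, the asymptotics
`Z_N ~ K(N) w / (1 - w)²` hold uniformly nearby: by `asymAt_of_norm_lt` where `Re v ≥ 0`, and by
contraction of the recursion when `|q| > 1` (`asymAt_of_one_lt`) where `Re v < 0`. Such a point is
`Good`, so the identity `potU = Re F`, valid at the start of the arc, propagates up to the first zero
met on it. There `potU` tends to `-∞` while `F` is bounded (`not_analyticAt_potU`).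
-/

open Filter Real

/-- The pinning partition function. -/
noncomputable def pinZ (K : ℕ → ℝ) (N : ℕ) (h : ℂ) : ℂ :=
  ∑ k ∈ Finset.Icc 1 N, Complex.exp ((k : ℂ) * h) *
    ∑ ℓ ∈ (Finset.Nat.antidiagonalTuple k N).filter (fun ℓ => ∀ i, 1 ≤ ℓ i),
      ∏ i, (K (ℓ i) : ℂ)

/-- The special inter-arrival law `K(n) = Γ(n−α)/(−Γ(−α)·n!)`. -/
noncomputable def specialK (α : ℝ) (n : ℕ) : ℝ :=
  Real.Gamma ((n : ℝ) - α) / (-Real.Gamma (-α) * (n.factorial : ℝ))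

/-! ### The special law and its powers -/

/-- The special law with exponent `1/2`. Its formula gives `-1` at `0`, which is minus the constant
coefficient of `√(1 - X)` and lets the recursion `lawK_succ` start at `0`. -/
noncomputable def lawK (n : ℕ) : ℝ := specialK (1 / 2) n

lemma Gamma_neg_half : Real.Gamma (-(1 / 2) : ℝ) ≠ 0 := by
  apply Real.Gamma_ne_zero
  intro m h
  have h2 : (1 : ℝ) = 2 * m := by linarith
  have h3 : (1 : ℕ) = 2 * m := by exact_mod_cast h2
  omega

lemma lawK_zero : lawK 0 = -1 := by
  have h := Gamma_neg_half
  simp only [lawK, specialK, Nat.cast_zero, zero_sub, Nat.factorial_zero, Nat.cast_one, mul_one]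
  rw [div_neg, div_self h]

lemma lawK_succ (n : ℕ) : ((n : ℝ) + 1) * lawK (n + 1) = (n - 1 / 2) * lawK n := by
  have h := Gamma_neg_half
  have hne : (n : ℝ) - 1 / 2 ≠ 0 := by
    intro h
    have h2 : (2 : ℝ) * n = 1 := by linarith
    have h3 : 2 * n = 1 := by exact_mod_cast h2
    omega
  have hG := Real.Gamma_add_one hne
  have hf : (n.factorial : ℝ) ≠ 0 := by exact_mod_cast n.factorial_ne_zero
  have hn : (n : ℝ) + 1 ≠ 0 := by positivity
  simp only [lawK, specialK, Nat.factorial_succ, Nat.cast_mul, Nat.cast_add, Nat.cast_one]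
  rw [show (n : ℝ) + 1 - 1 / 2 = n - 1 / 2 + 1 by ring, hG]
  field_simp

lemma lawK_one : lawK 1 = 1 / 2 := by
  have := lawK_succ 0
  norm_num [lawK_zero] at this ⊢
  linarith

lemma lawK_succ' (n : ℕ) : lawK (n + 1) = (n - 1 / 2) / (n + 1) * lawK n := by
  have hn : (n : ℝ) + 1 ≠ 0 := by positivity
  field_simp
  linarith [lawK_succ n]

/-- A crude polynomial lower bound, far from the true order `n^(-3/2)`; it makes `log K(n)` of order
`log n`. -/
lemma lawK_lower (n : ℕ) : 1 / (2 * ((n : ℝ) + 1) ^ 2) ≤ lawK (n + 1) := by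
  induction n with
  | zero => simp [lawK_one]
  | succ n ih =>
    rw [lawK_succ']
    push_cast
    have hn : (0 : ℝ) ≤ n := Nat.cast_nonneg n
    calc 1 / (2 * ((n : ℝ) + 1 + 1) ^ 2)
        ≤ ((n : ℝ) + 1 - 1 / 2) / (n + 1 + 1) * (1 / (2 * ((n : ℝ) + 1) ^ 2)) := by
          rw [div_mul_div_comm, div_le_div_iff₀ (by positivity) (by positivity)]
          nlinarith [mul_nonneg hn (by positivity : (0 : ℝ) ≤ (n + 2) * (n + 1) ^ 0)]
      _ ≤ _ := by
          apply mul_le_mul_of_nonneg_left ih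
          apply div_nonneg <;> linarith

lemma lawK_pos (n : ℕ) : 0 < lawK (n + 1) :=
  lt_of_lt_of_le (by positivity) (lawK_lower n)

/-- The mass of `{n+1, n+2, …}` is `2 (n+1) K(n+1)`. -/
lemma sum_lawK (n : ℕ) :
    ∑ j ∈ Finset.range n, lawK (j + 1) = 1 - 2 * ((n : ℝ) + 1) * lawK (n + 1) := by
  induction n with
  | zero => simp [lawK_one]
  | succ n ih =>
    have h := lawK_succ (n + 1)
    push_cast at h ⊢
    rw [Finset.sum_range_succ, ih]
    linarith

lemma sum_lawK_le (n : ℕ) : ∑ j ∈ Finset.range n, lawK (j + 1) ≤ 1 := by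
  rw [sum_lawK]
  have := lawK_pos n
  nlinarith [mul_pos (by positivity : (0 : ℝ) < n + 1) this]

lemma lawK_le_one (n : ℕ) : lawK (n + 1) ≤ 1 := by
  refine le_trans ?_ (sum_lawK_le (n + 1))
  rw [Finset.sum_range_succ]
  have : 0 ≤ ∑ j ∈ Finset.range n, lawK (j + 1) :=
    Finset.sum_nonneg fun j _ => (lawK_pos j).le
  linarith

/-! ### The generating series of the law -/

section Series

open PowerSeries

/-- The formal series `√(1 - X)`. -/
noncomputable def serS : PowerSeries ℝ := PowerSeries.mk fun n => -lawK n

/-- The generating series `1 - √(1 - X)` of the law. -/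
noncomputable def serU : PowerSeries ℝ := 1 - serS

lemma coeff_serU (n : ℕ) : coeff n serU = if n = 0 then 0 else lawK n := by
  rcases Nat.eq_zero_or_pos n with h | h
  · subst h; simp [serU, serS, lawK_zero]
  · simp [serU, serS, coeff_one, h.ne']

/-- `y = √(1 - X)` solves `(1 - X) ∂y = -y/2`; in coefficients this is `lawK_succ`. -/
lemma serS_ode : (1 - X) * d⁄dX ℝ serS = -C (1 / 2 : ℝ) * serS := by
  ext n
  rw [sub_mul, one_mul, map_sub, coeff_derivative, neg_mul, map_neg, coeff_C_mul]
  cases n with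
  | zero => simp [serS, lawK_one, lawK_zero]
  | succ n =>
    rw [coeff_succ_X_mul, coeff_derivative]
    have := lawK_succ (n + 1)
    simp only [serS, coeff_mk]
    push_cast at this ⊢
    linarith

/-- The square `y` solves `(1 - X) ∂y = -y` with `y(0) = 1`, which determines it. -/
lemma serS_sq : serS ^ 2 = 1 - X := by
  have hode : (1 - X) * d⁄dX ℝ (serS ^ 2) = -(serS ^ 2) := by
    have h2 : (2 : PowerSeries ℝ) * C (1 / 2 : ℝ) = 1 := by
      rw [show (2 : PowerSeries ℝ) = C (2 : ℝ) from (map_ofNat C 2).symm, ← map_mul]; norm_num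
    rw [derivative_pow]
    have := serS_ode
    simp only [Nat.cast_ofNat, Nat.add_one_sub_one, pow_one]
    linear_combination (2 * serS) * this - serS ^ 2 * h2
  set y := serS ^ 2 with hy
  have h0 : coeff 0 y = 1 := by simp [hy, serS, lawK_zero]
  have hrec : ∀ n : ℕ, ((n : ℝ) + 1) * coeff (n + 1) y = ((n : ℝ) - 1) * coeff n y := by
    intro n
    have := congrArg (coeff n) hode
    rw [sub_mul, one_mul, map_sub, coeff_derivative, map_neg] at this
    cases n with
    | zero => simp at this ⊢; linarith
    | succ n =>
      rw [coeff_succ_X_mul, coeff_derivative] at this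
      push_cast at this ⊢
      linarith
  have h1 : coeff 1 y = -1 := by have := hrec 0; simp only [h0] at this; norm_num at this; linarith
  have h2 : ∀ n, coeff (n + 2) y = 0 := by
    intro n
    induction n with
    | zero => have := hrec 1; norm_num at this; linarith
    | succ n ih =>
      have := hrec (n + 2)
      rw [ih, mul_zero] at this
      have h3 : (((n + 2 : ℕ) : ℝ) + 1) ≠ 0 := by positivity
      exact (mul_eq_zero.mp this).resolve_left h3
  ext n
  match n with
  | 0 => rw [h0]; simp
  | 1 => rw [h1]; simp [coeff_one]
  | n + 2 => rw [h2]; simp [coeff_one, coeff_X]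

/-- The `k`-fold convolution of the law at `N`: the probability that the `k`-th renewal epoch
is `N`. -/
noncomputable def conv (k N : ℕ) : ℝ := coeff N (serU ^ k)

lemma conv_zero (N : ℕ) : conv 0 N = if N = 0 then 1 else 0 := by
  simp [conv, coeff_one]

lemma conv_one (N : ℕ) : conv 1 (N + 1) = lawK (N + 1) := by
  simp [conv, coeff_serU]

/-- The generating series `u = 1 - √(1 - X)` is a root of `u² = 2u - X`. -/
lemma conv_rec (k N : ℕ) : conv (k + 2) (N + 1) = 2 * conv (k + 1) (N + 1) - conv k N := by
  have h : serU ^ (k + 2) = 2 * serU ^ (k + 1) - X * serU ^ k := by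
    have := serS_sq
    rw [pow_add, pow_succ serU k]
    have h2 : serU ^ 2 = 2 * serU - X := by
      rw [serU]; linear_combination this
    rw [h2]; ring
  rw [conv, h, map_sub, coeff_succ_X_mul, show (2 : PowerSeries ℝ) = C (2 : ℝ) from (map_ofNat C 2).symm,
    coeff_C_mul]
  rfl

lemma conv_nonneg (k N : ℕ) : 0 ≤ conv k N := by
  rw [conv, coeff_pow]
  refine Finset.sum_nonneg fun l _ => Finset.prod_nonneg fun i _ => ?_
  rw [coeff_serU]
  split_ifs with h
  · exact le_rfl
  · obtain ⟨m, hm⟩ := Nat.exists_eq_succ_of_ne_zero h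
    rw [hm]; exact (lawK_pos m).le

lemma conv_eq_zero {k N : ℕ} (h : N < k) : conv k N = 0 := by
  apply coeff_of_lt_order
  have h1 : (1 : ℕ∞) ≤ serU.order := by
    apply one_le_order_iff_constCoeff_eq_zero.mpr
    rw [← coeff_zero_eq_constantCoeff_apply, coeff_serU]; simp
  calc (N : ℕ∞) < k := by exact_mod_cast h
    _ = k • (1 : ℕ∞) := by simp
    _ ≤ k • serU.order := by gcongr
    _ ≤ _ := le_order_pow serU k

/-- Since `(1 - u) ∂u = 1/2`, the coefficients of `u^k ∂u` decrease in `k` by explicit amounts. -/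
lemma conv_succ_succ (k m : ℕ) :
    ((m : ℝ) + 1) * conv (k + 1) (m + 1) =
      (k + 1) * (((m : ℝ) + 1) * lawK (m + 1) - (∑ i ∈ Finset.range k, conv i m) / 2) := by
  have hsu : serS * d⁄dX ℝ serU = C (1 / 2 : ℝ) := by
    have h1 := congrArg (d⁄dX ℝ) serS_sq
    have h2 : (2 : PowerSeries ℝ) * C (1 / 2 : ℝ) = 1 := by
      rw [show (2 : PowerSeries ℝ) = C (2 : ℝ) from (map_ofNat C 2).symm, ← map_mul]; norm_num
    rw [derivative_pow] at h1
    simp only [Nat.cast_ofNat, Nat.add_one_sub_one, pow_one, map_sub, derivative_X,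
      derivative_one] at h1
    have h3 : d⁄dX ℝ serU = - d⁄dX ℝ serS := by simp [serU]
    rw [h3]
    linear_combination (-C (1 / 2 : ℝ)) * h1 + (serS * d⁄dX ℝ serS) * h2
  have he : ∀ k : ℕ, coeff m (serU ^ k * d⁄dX ℝ serU) =
      ((m : ℝ) + 1) * lawK (m + 1) - (∑ i ∈ Finset.range k, conv i m) / 2 := by
    intro k
    induction k with
    | zero => simp [coeff_derivative, coeff_serU]; ring
    | succ k ih =>
      have : serU ^ (k + 1) * d⁄dX ℝ serU
          = serU ^ k * d⁄dX ℝ serU - C (1 / 2 : ℝ) * serU ^ k := by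
        rw [← hsu, pow_succ, serU]; ring
      rw [this, map_sub, ih, coeff_C_mul, Finset.sum_range_succ]
      simp only [conv]; ring
  have h := congrArg (coeff m) (derivative_pow serU (k + 1))
  rw [coeff_derivative, Nat.add_sub_cancel, mul_assoc,
    show ((k + 1 : ℕ) : PowerSeries ℝ) = C ((k : ℝ) + 1) by simp, coeff_C_mul, he] at h
  rw [← h]
  simp only [conv]; ring

/-- Single big jump bound with the sharp constant `k`. -/
lemma conv_le (k m : ℕ) : conv k (m + 1) ≤ k * lawK (m + 1) := by
  cases k with
  | zero => simp [conv_zero]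
  | succ k =>
    have h := conv_succ_succ k m
    have hs : 0 ≤ ∑ i ∈ Finset.range k, conv i m := Finset.sum_nonneg fun i _ => conv_nonneg i m
    have hm : (0 : ℝ) < (m : ℝ) + 1 := by positivity
    refine le_of_mul_le_mul_left ?_ hm
    rw [h]
    push_cast
    nlinarith [mul_nonneg (by positivity : (0 : ℝ) ≤ (k : ℝ) + 1) hs]

lemma le_conv (k m : ℕ) :
    (k + 1) * lawK (m + 2) * (1 - 2 * (k : ℝ) ^ 2 / (m + 2)) ≤ conv (k + 1) (m + 2) := by
  have h := conv_succ_succ k (m + 1)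
  have hs : ∑ i ∈ Finset.range k, conv i (m + 1) ≤ (k : ℝ) ^ 2 * (4 * lawK (m + 2)) := by
    calc ∑ i ∈ Finset.range k, conv i (m + 1) ≤ ∑ i ∈ Finset.range k, (k : ℝ) * lawK (m + 1) := by
          refine Finset.sum_le_sum fun i hi => (conv_le i m).trans ?_
          have : (i : ℝ) ≤ k := by exact_mod_cast (Finset.mem_range.mp hi).le
          exact mul_le_mul_of_nonneg_right this (lawK_pos m).le
      _ = (k : ℝ) ^ 2 * lawK (m + 1) := by simp; ring
      _ ≤ _ := by
          apply mul_le_mul_of_nonneg_left _ (by positivity)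
          have h1 := lawK_succ (m + 1)
          push_cast at h1
          have h2 := lawK_pos m
          have h3 := lawK_pos (m + 1)
          have hm : (0 : ℝ) ≤ m := Nat.cast_nonneg m
          nlinarith [mul_nonneg hm h2.le]
  have hm : (0 : ℝ) < (m : ℝ) + 2 := by positivity
  refine le_of_mul_le_mul_left ?_ hm
  push_cast at h
  have h' : ((m : ℝ) + 2) * conv (k + 1) (m + 2) = (k + 1) *
      (((m : ℝ) + 2) * lawK (m + 2) - (∑ i ∈ Finset.range k, conv i (m + 1)) / 2) := by
    rw [show (m : ℝ) + 2 = m + 1 + 1 by ring]; exact h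
  rw [h']
  have h5 : ((m : ℝ) + 2) * ((k + 1) * lawK (m + 2) * (1 - 2 * (k : ℝ) ^ 2 / (m + 2)))
      = (k + 1) * (((m : ℝ) + 2) * lawK (m + 2) - ((k : ℝ) ^ 2 * (4 * lawK (m + 2))) / 2) := by
    field_simp; ring
  rw [h5]
  gcongr

lemma tendsto_conv (k : ℕ) :
    Tendsto (fun N : ℕ => conv k N / lawK N) atTop (nhds k) := by
  cases k with
  | zero =>
    refine (tendsto_congr' ?_).mpr (by simpa using tendsto_const_nhds)
    filter_upwards [eventually_ge_atTop 1] with N hN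
    rw [conv_zero, if_neg (by omega)]; simp
  | succ k =>
    rw [← tendsto_add_atTop_iff_nat 2]
    have hl : Tendsto (fun m : ℕ => ((k : ℝ) + 1) * (1 - 2 * (k : ℝ) ^ 2 / ((m : ℝ) + 2)))
        atTop (nhds (((k + 1 : ℕ) : ℝ))) := by
      have : Tendsto (fun m : ℕ => 2 * (k : ℝ) ^ 2 / ((m : ℝ) + 2)) atTop (nhds 0) :=
        Tendsto.div_atTop tendsto_const_nhds
          (tendsto_atTop_add_const_right _ _ tendsto_natCast_atTop_atTop)
      simpa using (tendsto_const_nhds (x := (k : ℝ) + 1)).mul (this.const_sub 1)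
    refine tendsto_of_tendsto_of_tendsto_of_le_of_le hl tendsto_const_nhds ?_ ?_
    · intro m
      simp only
      rw [le_div_iff₀ (lawK_pos (m + 1))]
      calc _ = _ := by ring
        _ ≤ _ := le_conv k m
    · intro m
      simp only
      rw [div_le_iff₀ (lawK_pos (m + 1))]
      exact conv_le (k + 1) (m + 1)

/-! ### The partition function as a polynomial -/

/-- The partition function as a polynomial in `w = e^h`, with value `1` at `N = 0`. -/
noncomputable def polyZ (N : ℕ) (w : ℂ) : ℂ :=
  ∑ k ∈ Finset.range (N + 1), (conv k N : ℂ) * w ^ k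

/-- The coefficient of `u^k` as the sum over compositions of `N` into `k` positive parts. -/
lemma conv_eq_sum (k N : ℕ) :
    conv k N = ∑ ℓ ∈ (Finset.Nat.antidiagonalTuple k N).filter (fun ℓ => ∀ i, 1 ≤ ℓ i),
      ∏ i, lawK (ℓ i) := by
  have h1 : conv k N = ∑ ℓ ∈ Finset.Nat.antidiagonalTuple k N, ∏ i, coeff (ℓ i) serU := by
    have : serU ^ k = ∏ _i : Fin k, serU := by simp
    rw [conv, this, coeff_prod]
    refine Finset.sum_nbij' (fun l => ⇑l) (fun f => Finsupp.equivFunOnFinite.symm f) ?_ ?_ ?_ ?_ ?_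
    · intro l hl
      rw [Finset.mem_finsuppAntidiag] at hl
      rw [Finset.Nat.mem_antidiagonalTuple]; exact hl.1
    · intro f hf
      rw [Finset.Nat.mem_antidiagonalTuple] at hf
      rw [Finset.mem_finsuppAntidiag]
      exact ⟨by simpa using hf, by simp⟩
    · intro l _; ext; simp
    · intro f _; ext; simp
    · intro l _; rfl
  rw [h1, Finset.sum_filter]
  refine Finset.sum_congr rfl fun ℓ _ => ?_
  split_ifs with h
  · refine Finset.prod_congr rfl fun i _ => ?_
    rw [coeff_serU, if_neg (by have := h i; omega)]
  · push Not at h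
    obtain ⟨i, hi⟩ := h
    exact Finset.prod_eq_zero (Finset.mem_univ i) (by rw [coeff_serU, if_pos (by omega)])

lemma pinZ_eq (n : ℕ) (h : ℂ) :
    pinZ (specialK (1 / 2)) (n + 1) h = polyZ (n + 1) (Complex.exp h) := by
  rw [pinZ, polyZ, Finset.range_eq_Ico, Finset.sum_eq_sum_Ico_succ_bot (by omega), conv_zero,
    if_neg (by omega)]
  simp only [Complex.ofReal_zero, zero_mul, zero_add]
  refine Finset.sum_congr rfl fun k _ => ?_
  rw [Complex.exp_nat_mul, mul_comm, conv_eq_sum]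
  push_cast
  rfl

end Series

lemma polyZ_zero (w : ℂ) : polyZ 0 w = 1 := by
  simp [polyZ, conv_zero]

/-- The two-term recursion in `N` obtained by summing `conv_rec` over `k`. -/
lemma polyZ_rec (N : ℕ) (w : ℂ) :
    (2 * w - 1) * polyZ (N + 1) w = w ^ 2 * polyZ N w - w * lawK (N + 1) := by
  have h1 : polyZ (N + 1) w = lawK (N + 1) * w +
      ∑ k ∈ Finset.range (N + 1), (conv (k + 2) (N + 1) : ℂ) * w ^ (k + 2) := by
    rw [polyZ, Finset.sum_range_succ', Finset.sum_range_succ', Finset.sum_range_succ,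
      conv_eq_zero (show N + 1 < N + 2 by omega), conv_zero, if_neg (by omega), zero_add, conv_one]
    simp; ring
  have h2 : polyZ (N + 1) w =
      ∑ k ∈ Finset.range (N + 1), (conv (k + 1) (N + 1) : ℂ) * w ^ (k + 1) := by
    rw [polyZ, Finset.sum_range_succ', conv_zero, if_neg (by omega)]
    simp
  have h3 : polyZ (N + 1) w = lawK (N + 1) * w + 2 * w * polyZ (N + 1) w - w ^ 2 * polyZ N w := by
    conv_lhs => rw [h1]
    conv_rhs => rw [h2, polyZ]
    rw [Finset.mul_sum, Finset.mul_sum, add_sub_assoc, ← Finset.sum_sub_distrib]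
    congr 1
    refine Finset.sum_congr rfl fun k _ => ?_
    rw [conv_rec]
    push_cast
    ring
  linear_combination -h3

lemma differentiable_polyZ (N : ℕ) : Differentiable ℂ (polyZ N) := by
  unfold polyZ; fun_prop

/-- The partition function for real arguments. -/
noncomputable def realZ (N : ℕ) (w : ℝ) : ℝ := ∑ k ∈ Finset.range (N + 1), conv k N * w ^ k

lemma polyZ_ofReal (N : ℕ) (w : ℝ) : polyZ N w = realZ N w := by
  simp [polyZ, realZ]

lemma le_realZ (n : ℕ) {w : ℝ} (hw : 0 < w) : lawK (n + 1) * w ≤ realZ (n + 1) w := by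
  have := Finset.single_le_sum (f := fun k => conv k (n + 1) * w ^ k)
    (fun k _ => mul_nonneg (conv_nonneg k (n + 1)) (pow_nonneg hw.le k))
    (show 1 ∈ Finset.range (n + 1 + 1) by simp)
  rw [conv_one, pow_one] at this
  exact this

lemma realZ_pos (n : ℕ) {w : ℝ} (hw : 0 < w) : 0 < realZ (n + 1) w :=
  lt_of_lt_of_le (mul_pos (lawK_pos n) hw) (le_realZ n hw)

lemma norm_polyZ_le (n : ℕ) (w : ℂ) {R : ℝ} (hR : 1 ≤ R) (hw : ‖w‖ ≤ R) :
    ‖polyZ (n + 1) w‖ ≤ (n + 2) * ((n + 1) * R ^ (n + 1)) := by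
  refine (norm_sum_le _ _).trans ?_
  calc _ ≤ ∑ k ∈ Finset.range (n + 1 + 1), ((n : ℝ) + 1) * R ^ (n + 1) := by
        refine Finset.sum_le_sum fun k hk => ?_
        have hk' : k ≤ n + 1 := by simpa [Nat.lt_succ_iff] using Finset.mem_range.mp hk
        rw [norm_mul, norm_pow, Complex.norm_real, Real.norm_of_nonneg (conv_nonneg _ _)]
        gcongr
        · calc conv k (n + 1) ≤ k * lawK (n + 1) := conv_le k n
            _ ≤ k * 1 := by gcongr; exact lawK_le_one n
            _ ≤ n + 1 := by rw [mul_one]; exact_mod_cast hk'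
        · exact (pow_le_pow_left₀ (norm_nonneg w) hw k).trans (pow_le_pow_right₀ hR hk')
    _ = _ := by
        rw [Finset.sum_const, Finset.card_range, nsmul_eq_mul]; push_cast; ring

/-! ### Asymptotics of the partition function -/

/-- The limit of `Z_N / K(N)` in the delocalised regime, as a function of `w = e^h`. -/
noncomputable def limL (w : ℂ) : ℂ := w / (1 - w) ^ 2

/-- `Z_N / K(N)` converges to `w / (1-w)^2` uniformly near `w`. -/
def AsymAt (w : ℂ) : Prop :=
  ∀ ε > 0, ∃ n0 : ℕ, ∀ᶠ z in nhds w, ∀ n ≥ n0,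
    ‖polyZ (n + 1) z / lawK (n + 1) - limL z‖ ≤ ε

/-- For `|w| < 1` the polynomial `Z_N / K(N) = ∑ (conv k N / K(N)) w^k` converges by dominated
convergence to `∑ k w^k`, since `conv k N / K(N)` tends to `k` and is at most `k`. -/
lemma asymAt_of_norm_lt {w : ℂ} (hw : ‖w‖ < 1) : AsymAt w := by
  intro ε hε
  obtain ⟨ρ, hρ1, hρ2⟩ := exists_between hw
  have hρ0 : 0 ≤ ρ := (norm_nonneg w).trans hρ1.le
  have hsum : Summable fun k : ℕ => (k : ℝ) * ρ ^ k := by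
    have := summable_pow_mul_geometric_of_norm_lt_one (R := ℝ) 1 (r := ρ)
      (by rwa [Real.norm_of_nonneg hρ0])
    simpa using this
  have hle : ∀ k n : ℕ, |conv k (n + 1) / lawK (n + 1) - k| ≤ k := by
    intro k n
    have h1 : 0 ≤ conv k (n + 1) / lawK (n + 1) := div_nonneg (conv_nonneg _ _) (lawK_pos n).le
    have h2 : conv k (n + 1) / lawK (n + 1) ≤ k := by
      rw [div_le_iff₀ (lawK_pos n)]; exact conv_le k n
    rw [abs_le]; constructor <;> linarith
  have hd : Tendsto (fun n : ℕ => ∑' k : ℕ, |conv k (n + 1) / lawK (n + 1) - k| * ρ ^ k)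
      atTop (nhds 0) := by
    have := tendsto_tsum_of_dominated_convergence (𝓕 := atTop)
      (f := fun (n : ℕ) (k : ℕ) => |conv k (n + 1) / lawK (n + 1) - k| * ρ ^ k)
      (g := fun _ => (0 : ℝ)) hsum ?_ ?_
    · simpa using this
    · intro k
      have h1 := (tendsto_add_atTop_iff_nat 1).mpr (tendsto_conv k)
      have h2 := ((h1.sub_const (k : ℝ)).abs).mul_const (ρ ^ k)
      simpa using h2
    · refine Eventually.of_forall fun n k => ?_
      rw [Real.norm_of_nonneg (by positivity)]
      exact mul_le_mul_of_nonneg_right (hle k n) (by positivity)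
  obtain ⟨n0, hn0⟩ := eventually_atTop.mp (hd.eventually (ge_mem_nhds hε))
  refine ⟨n0, ?_⟩
  have hnear : ∀ᶠ z : ℂ in nhds w, ‖z‖ < ρ := continuous_norm.continuousAt.eventually_lt
    continuousAt_const hρ1
  filter_upwards [hnear] with z hz n hn
  refine le_trans ?_ (hn0 n hn)
  have hz1 : ‖z‖ < 1 := hz.trans hρ2
  have hs1 : HasSum (fun k : ℕ => ((conv k (n + 1) / lawK (n + 1) : ℝ) : ℂ) * z ^ k)
      (polyZ (n + 1) z / lawK (n + 1)) := by
    have : polyZ (n + 1) z / lawK (n + 1) = ∑ k ∈ Finset.range (n + 1 + 1),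
        ((conv k (n + 1) / lawK (n + 1) : ℝ) : ℂ) * z ^ k := by
      rw [polyZ, Finset.sum_div]
      refine Finset.sum_congr rfl fun k _ => ?_
      push_cast; ring
    rw [this]
    apply hasSum_sum_of_ne_finset_zero
    intro k hk
    rw [conv_eq_zero (by simpa [Nat.lt_succ_iff] using hk)]; simp
  have hs2 := hasSum_coe_mul_geometric_of_norm_lt_one hz1
  have hs := hs1.sub hs2
  rw [limL, ← hs.tsum_eq]
  have hsm : Summable fun k : ℕ => |conv k (n + 1) / lawK (n + 1) - k| * ρ ^ k := by
    refine Summable.of_nonneg_of_le (fun k => by positivity) (fun k => ?_) hsum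
    exact mul_le_mul_of_nonneg_right (hle k n) (by positivity)
  refine tsum_of_norm_bounded hsm.hasSum fun k => ?_
  rw [← sub_mul, norm_mul, norm_pow]
  have : ((conv k (n + 1) / lawK (n + 1) : ℝ) : ℂ) - (k : ℂ) =
      ((conv k (n + 1) / lawK (n + 1) - k : ℝ) : ℂ) := by push_cast; rfl
  rw [this, Complex.norm_real, Real.norm_eq_abs]
  gcongr

/-- For `|q| > 1`, where `q = (2w-1)/w²`, the two-term recursion contracts towards its fixed
point. -/
lemma asymAt_of_one_lt {w : ℂ} (hw0 : w ≠ 0) (hw : 1 < ‖(2 * w - 1) / w ^ 2‖) : AsymAt w := by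
  intro ε hε
  have hw1 : w ≠ 1 := by
    rintro rfl; norm_num at hw
  obtain ⟨ρ, hρ1, hρ2⟩ := exists_between hw
  have hρ0 : 0 < ρ := by linarith
  obtain ⟨κ, hκ1, hκ2⟩ := exists_between (inv_lt_one_of_one_lt₀ hρ1)
  have hκ0 : 0 < κ := (inv_pos.mpr hρ0).trans hκ1
  set M := ‖limL w‖ + 1 with hM
  have hM0 : 0 < M := by positivity
  have hcL : ContinuousAt limL w := by
    unfold limL
    refine ContinuousAt.div continuousAt_id (by fun_prop) ?_
    exact pow_ne_zero _ (sub_ne_zero.mpr hw1.symm)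
  -- `r n = (n + 2) / (n + 1/2)` is the ratio `K(n+1) / K(n+2)`
  have hr : Tendsto (fun n : ℕ => ((n : ℝ) + 2) / (n + 1 / 2)) atTop (nhds 1) := by
    have h : Tendsto (fun n : ℕ => 1 + (3 / 2) / ((n : ℝ) + 1 / 2)) atTop (nhds (1 + 0)) :=
      (Tendsto.div_atTop tendsto_const_nhds
        (tendsto_atTop_add_const_right _ _ tendsto_natCast_atTop_atTop)).const_add 1
    rw [add_zero] at h
    refine h.congr fun n => ?_
    have : (n : ℝ) + 1 / 2 ≠ 0 := by positivity
    field_simp; ring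
  -- `η` is chosen so that `ε / 2` is a fixed point of `x ↦ κ x + η`
  set η := ε / 2 * (1 - κ) with hη
  have hη0 : 0 < η := mul_pos (by linarith) (by linarith)
  have he1 : ∀ᶠ n : ℕ in atTop, ((n : ℝ) + 2) / (n + 1 / 2) * ρ⁻¹ < κ :=
    (hr.mul_const ρ⁻¹).eventually (gt_mem_nhds (by simpa using hκ1))
  have he2 : ∀ᶠ n : ℕ in atTop, (((n : ℝ) + 2) / (n + 1 / 2) - 1) * M * ρ⁻¹ < η := by
    have : Tendsto (fun n : ℕ => (((n : ℝ) + 2) / (n + 1 / 2) - 1) * M * ρ⁻¹) atTop (nhds 0) := by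
      simpa using ((hr.sub_const 1).mul_const M).mul_const ρ⁻¹
    exact this.eventually (gt_mem_nhds hη0)
  obtain ⟨n1, hn1⟩ := eventually_atTop.mp (he1.and he2)
  set a : ℕ → ℂ → ℂ := fun n z => polyZ (n + 1) z / lawK (n + 1) - limL z with ha
  set A := ‖a n1 w‖ + 1 with hA
  have hA0 : 0 < A := by positivity
  have hca : ContinuousAt (a n1) w :=
    ((differentiable_polyZ (n1 + 1)).continuous.continuousAt.div_const _).sub hcL
  have hpow : Tendsto (fun m : ℕ => κ ^ m * A) atTop (nhds 0) := by
    simpa using (tendsto_pow_atTop_nhds_zero_of_lt_one hκ0.le hκ2).mul_const A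
  obtain ⟨m0, hm0⟩ := eventually_atTop.mp (hpow.eventually (gt_mem_nhds (half_pos hε)))
  refine ⟨n1 + m0, ?_⟩
  have hc1 : ∀ᶠ z in nhds w, ‖limL z‖ < M :=
    hcL.norm.eventually_lt continuousAt_const (by linarith)
  have hc2 : ∀ᶠ z in nhds w, ‖a n1 z‖ < A :=
    hca.norm.eventually_lt continuousAt_const (by linarith)
  have hc3 : ∀ᶠ z in nhds w, ρ < ‖(2 * z - 1) / z ^ 2‖ := by
    refine ContinuousAt.eventually_lt continuousAt_const ?_ hρ2
    have hcq : ContinuousAt (fun z : ℂ => (2 * z - 1) / z ^ 2) w :=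
      ContinuousAt.div (by fun_prop) (by fun_prop) (pow_ne_zero _ hw0)
    exact hcq.norm
  filter_upwards [hc1, hc2, hc3, eventually_ne_nhds hw0, eventually_ne_nhds hw1]
    with z hz1 hz2 hz3 hz0 hz4 n hn
  set q := (2 * z - 1) / z ^ 2 with hq
  have hq0 : q ≠ 0 := by
    intro h; rw [h, norm_zero] at hz3; linarith
  have hstep : ∀ n ≥ n1, ‖a (n + 1) z‖ ≤ κ * ‖a n z‖ + η := by
    intro n hn
    set r : ℝ := ((n : ℝ) + 2) / (n + 1 / 2) with hrd
    have hn2 : (0 : ℝ) < n + 1 / 2 := by positivity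
    have hr1 : 1 ≤ r := by rw [hrd, le_div_iff₀ hn2]; linarith
    have hK : lawK (n + 1) = r * lawK (n + 2) := by
      have := lawK_succ (n + 1)
      push_cast at this
      rw [hrd]; field_simp; linarith
    have hKp := lawK_pos n
    have hKp' := lawK_pos (n + 1)
    have hKc : (lawK (n + 2) : ℂ) ≠ 0 := by exact_mod_cast hKp'.ne'
    have hrc : (r : ℂ) ≠ 0 := by
      have : r ≠ 0 := by linarith
      exact_mod_cast this
    have h1z : (1 : ℂ) - z ≠ 0 := sub_ne_zero.mpr hz4.symm
    -- `limL z` solves `q L = L - 1 / z`, the stationary form of the recursion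
    have key : q * a (n + 1) z = r * a n z + (r - 1) * limL z := by
      have hrec := polyZ_rec (n + 1) z
      simp only [ha]
      rw [hK]
      have h2 : q * limL z = limL z - 1 / z := by
        rw [hq, limL]; field_simp; ring
      have h3 : q * polyZ (n + 1 + 1) z = polyZ (n + 1) z - lawK (n + 2) / z := by
        rw [hq]; field_simp; linear_combination hrec
      rw [mul_sub, h2, ← mul_div_assoc, h3]
      push_cast
      field_simp
      ring
    have h4 : ‖q‖ * ‖a (n + 1) z‖ ≤ r * ‖a n z‖ + (r - 1) * M := by
      rw [← norm_mul, key]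
      refine (norm_add_le _ _).trans ?_
      rw [norm_mul, norm_mul]
      have e1 : ‖(r : ℂ)‖ = r := by rw [Complex.norm_real, Real.norm_of_nonneg (by linarith)]
      have e2 : ‖(r : ℂ) - 1‖ = r - 1 := by
        rw [← Complex.ofReal_one, ← Complex.ofReal_sub, Complex.norm_real,
          Real.norm_of_nonneg (by linarith)]
      rw [e1, e2]
      have := mul_le_mul_of_nonneg_left hz1.le (by linarith : (0 : ℝ) ≤ r - 1)
      linarith
    have h5 : ρ * ‖a (n + 1) z‖ ≤ ‖q‖ * ‖a (n + 1) z‖ := by gcongr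
    have h6 : ‖a (n + 1) z‖ ≤ ρ⁻¹ * (r * ‖a n z‖ + (r - 1) * M) := by
      rw [inv_mul_eq_div, le_div_iff₀ hρ0]; linarith
    obtain ⟨h7, h8⟩ := hn1 n hn
    have h9 := mul_le_mul_of_nonneg_right h7.le (norm_nonneg (a n z))
    have h10 : ρ⁻¹ * (r * ‖a n z‖ + (r - 1) * M)
        = r * ρ⁻¹ * ‖a n z‖ + (r - 1) * M * ρ⁻¹ := by ring
    linarith
  have hiter : ∀ m, ‖a (n1 + m) z‖ ≤ κ ^ m * A + ε / 2 := by
    intro m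
    induction m with
    | zero => simp only [add_zero, pow_zero, one_mul]; linarith
    | succ m ih =>
      have h := hstep (n1 + m) (by omega)
      have h2 := mul_le_mul_of_nonneg_left ih hκ0.le
      rw [← add_assoc, pow_succ]
      calc _ ≤ _ := h
        _ ≤ κ * (κ ^ m * A + ε / 2) + η := by linarith
        _ = _ := by rw [hη]; ring
  obtain ⟨m, rfl⟩ := Nat.exists_eq_add_of_le (show n1 ≤ n by omega)
  have := hm0 m (by omega)
  have := hiter m
  show ‖a (n1 + m) z‖ ≤ ε
  linarith

lemma norm_log_le {z : ℂ} (hz : ‖z - 1‖ ≤ 1 / 2) : ‖Complex.log z‖ ≤ 1 := by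
  have h := Complex.norm_log_one_add_half_le_self hz
  rw [add_sub_cancel] at h
  linarith

lemma slit_of_near_one {z : ℂ} (hz : ‖z - 1‖ ≤ 1 / 2) : z ∈ Complex.slitPlane := by
  left
  have := (Complex.abs_re_le_norm (z - 1)).trans hz
  rw [abs_le] at this
  simp at this
  linarith

lemma abs_log_lawK_le (n : ℕ) : |Real.log (lawK (n + 1))| ≤ 1 + 2 * Real.log (n + 1) := by
  have h1 := lawK_lower n
  have h2 := lawK_le_one n
  have h3 := lawK_pos n
  rw [abs_of_nonpos (Real.log_nonpos h3.le h2)]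
  have h4 := Real.log_le_log (by positivity) h1
  have hn : (0 : ℝ) < (n : ℝ) + 1 := by positivity
  rw [one_div, Real.log_inv, Real.log_mul (by norm_num) (by positivity), Real.log_pow] at h4
  have := Real.log_two_lt_d9
  push_cast at h4
  linarith

lemma abs_log_lawK_le' (n : ℕ) : |Real.log (lawK (n + 1))| ≤ 2 * (n + 1) := by
  refine (abs_log_lawK_le n).trans ?_
  have h0 : (0 : ℝ) < (n : ℝ) + 1 := by positivity
  have := Real.log_le_sub_one_of_pos h0
  rcases Nat.eq_zero_or_pos n with rfl | hn
  · simp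
  · have : (1 : ℝ) ≤ n := by exact_mod_cast hn
    linarith

/-! ### Points near which all partition functions have holomorphic logarithms -/

/-- The `(n+1)`-st partition function at complex pinning strength `h`. -/
noncomputable def fZ (n : ℕ) (h : ℂ) : ℂ := polyZ (n + 1) (Complex.exp h)

/-- Near `h`, all `log Z_n` have holomorphic branches, growing at most linearly in `n`. -/
def Good (h : ℂ) : Prop :=
  ∃ δ > 0, ∃ C : ℝ, ∃ g : ℕ → ℂ → ℂ, ∀ n, DifferentiableOn ℂ (g n) (Metric.ball h δ) ∧
    ∀ z ∈ Metric.ball h δ, Complex.exp (g n z) = fZ n z ∧ ‖g n z‖ ≤ C * (n + 1)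

/-- The complex version `∑ p^n log |Z_{n+1}|` of the function under study. -/
noncomputable def potU (p : ℝ) (h : ℂ) : ℝ := ∑' n : ℕ, p ^ n * Real.log ‖fZ n h‖

lemma differentiable_fZ (n : ℕ) : Differentiable ℂ (fZ n) :=
  (differentiable_polyZ (n + 1)).comp Complex.differentiable_exp

/-- To be `Good` it suffices to have approximate holomorphic logarithms `e n` for large `n`: the
quotient `Z_n e^{-e n}` stays near `1`, where the principal logarithm is holomorphic. The finitely
many remaining factors are continuous and nonzero at `x`. -/
lemma good_of {x : ℂ} (hnz : ∀ n, fZ n x ≠ 0) (e : ℕ → ℂ → ℂ) (C : ℝ) (n0 : ℕ)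
    (h : ∀ᶠ z in nhds x, ∀ n ≥ n0, DifferentiableAt ℂ (e n) z ∧ ‖e n z‖ ≤ C * (n + 1) ∧
      ‖fZ n z * Complex.exp (-e n z) - 1‖ ≤ 1 / 2) : Good x := by
  have hsmall : ∀ᶠ z in nhds x, ∀ n ∈ Finset.range n0,
      ‖fZ n z * Complex.exp (-Complex.log (fZ n x)) - 1‖ ≤ 1 / 2 := by
    rw [Filter.eventually_all_finset]
    intro n _
    have hc : ContinuousAt (fun z => ‖fZ n z * Complex.exp (-Complex.log (fZ n x)) - 1‖) x :=
      (((differentiable_fZ n).continuous.continuousAt.mul_const _).sub_const _).norm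
    have hx : ‖fZ n x * Complex.exp (-Complex.log (fZ n x)) - 1‖ < 1 / 2 := by
      rw [Complex.exp_neg, Complex.exp_log (hnz n), mul_inv_cancel₀ (hnz n)]
      norm_num
    exact (hc.eventually_lt continuousAt_const hx).mono fun z hz => hz.le
  obtain ⟨δ, hδ, hb⟩ := Metric.eventually_nhds_iff_ball.mp (h.and hsmall)
  set e' : ℕ → ℂ → ℂ := fun n z => if n < n0 then Complex.log (fZ n x) else e n z with he'
  set S := ∑ n ∈ Finset.range n0, ‖Complex.log (fZ n x)‖ with hS
  have hS0 : 0 ≤ S := Finset.sum_nonneg fun _ _ => norm_nonneg _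
  have hdat : ∀ z ∈ Metric.ball x δ, ∀ n, DifferentiableAt ℂ (e' n) z ∧
      ‖e' n z‖ ≤ (|C| + S) * (n + 1) ∧ ‖fZ n z * Complex.exp (-e' n z) - 1‖ ≤ 1 / 2 := by
    intro z hz n
    obtain ⟨h1, h2⟩ := hb z hz
    have hn : (1 : ℝ) ≤ (n : ℝ) + 1 := by linarith [n.cast_nonneg (α := ℝ)]
    by_cases hlt : n < n0
    · have : e' n = fun _ => Complex.log (fZ n x) := by funext z; simp [he', hlt]
      rw [this]
      refine ⟨differentiableAt_const _, ?_, h2 n (Finset.mem_range.mpr hlt)⟩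
      have : ‖Complex.log (fZ n x)‖ ≤ S :=
        Finset.single_le_sum (f := fun n => ‖Complex.log (fZ n x)‖)
          (fun _ _ => norm_nonneg _) (Finset.mem_range.mpr hlt)
      have h0 := abs_nonneg C
      nlinarith
    · have : e' n = e n := by funext z; simp [he', hlt]
      rw [this]
      obtain ⟨a, b, c⟩ := h1 n (not_lt.mp hlt)
      refine ⟨a, b.trans ?_, c⟩
      have := le_abs_self C
      gcongr
      linarith
  refine ⟨δ, hδ, |C| + S + 1,
    fun n z => e' n z + Complex.log (fZ n z * Complex.exp (-e' n z)), fun n => ⟨?_, ?_⟩⟩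
  · intro z hz
    obtain ⟨a, b, c⟩ := hdat z hz n
    refine (a.add (DifferentiableAt.clog ?_ (slit_of_near_one c))).differentiableWithinAt
    exact ((differentiable_fZ n) z).mul a.neg.cexp
  · intro z hz
    obtain ⟨a, b, c⟩ := hdat z hz n
    constructor
    · rw [Complex.exp_add, Complex.exp_log (Complex.slitPlane_ne_zero (slit_of_near_one c)),
        mul_left_comm, ← Complex.exp_add, add_neg_cancel, Complex.exp_zero, mul_one]
    · refine (norm_add_le _ _).trans ?_
      have := norm_log_le c
      have := n.cast_nonneg (α := ℝ)
      linarith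

lemma summable_lin {p : ℝ} (hp : p ∈ Set.Ioo (0 : ℝ) 1) (m : ℕ) :
    Summable fun n : ℕ => p ^ n * ((n : ℝ) + 1) ^ m := by
  have h := summable_pow_mul_geometric_of_norm_lt_one (R := ℝ) m (r := p)
    (by rw [Real.norm_of_nonneg hp.1.le]; exact hp.2)
  have h2 := ((summable_nat_add_iff 1).mpr h).mul_left p⁻¹
  refine h2.congr fun n => ?_
  have := hp.1.ne'
  push_cast
  field_simp
  ring

/-- Near a `Good` point the potential is the real part of a holomorphic function. -/
lemma Good.spec {p : ℝ} (hp : p ∈ Set.Ioo (0 : ℝ) 1) {x : ℂ} (h : Good x) :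
    ∃ δ > 0, (∀ z ∈ Metric.ball x δ, ∀ n, fZ n z ≠ 0) ∧ ∃ G : ℂ → ℂ,
      DifferentiableOn ℂ G (Metric.ball x δ) ∧
      ∀ z ∈ Metric.ball x δ, potU p z = (G z).re := by
  obtain ⟨δ, hδ, C, g, hg⟩ := h
  have hbd : ∀ n, ∀ z ∈ Metric.ball x δ, ‖(p : ℂ) ^ n * g n z‖ ≤ C * (p ^ n * ((n : ℝ) + 1) ^ 1) := by
    intro n z hz
    rw [norm_mul, norm_pow, Complex.norm_real, Real.norm_of_nonneg hp.1.le]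
    have := mul_le_mul_of_nonneg_left ((hg n).2 z hz).2 (pow_nonneg hp.1.le n)
    linarith
  have hsum := (summable_lin hp 1).mul_left C
  refine ⟨δ, hδ, fun z hz n => ?_, fun z => ∑' n, (p : ℂ) ^ n * g n z, ?_, fun z hz => ?_⟩
  · rw [← ((hg n).2 z hz).1]; exact Complex.exp_ne_zero _
  · exact Complex.differentiableOn_tsum_of_summable_norm hsum
      (fun n => (hg n).1.const_mul _) Metric.isOpen_ball hbd
  · have hs : Summable fun n => (p : ℂ) ^ n * g n z :=
      Summable.of_norm_bounded hsum fun n => hbd n z hz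
    rw [Complex.re_tsum hs, potU]
    refine tsum_congr fun n => ?_
    rw [← ((hg n).2 z hz).1, Complex.norm_exp, Real.log_exp, ← Complex.ofReal_pow,
      Complex.re_ofReal_mul]

/-- Where `Z_N ~ K(N) L(w)`, with `L(w) ≠ 0`, the constant `log K(N) + log L(w)` is an approximate
logarithm of `Z_N`. -/
lemma good_of_asym {x : ℂ} (hnz : ∀ n, fZ n x ≠ 0) (hx : Complex.exp x ≠ 1)
    (h : AsymAt (Complex.exp x)) : Good x := by
  set w := Complex.exp x with hw
  have hw0 : w ≠ 0 := Complex.exp_ne_zero x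
  have h1w : (1 : ℂ) - w ≠ 0 := sub_ne_zero.mpr (Ne.symm hx)
  have hL : limL w ≠ 0 := div_ne_zero hw0 (pow_ne_zero _ h1w)
  have hcL : ContinuousAt limL w :=
    ContinuousAt.div continuousAt_id (by fun_prop) (pow_ne_zero _ h1w)
  have hL4 : 0 < ‖limL w‖ / 4 := by positivity
  obtain ⟨n0, hn0⟩ := h _ hL4
  refine good_of hnz (fun n _ => (Real.log (lawK (n + 1)) : ℂ) + Complex.log (limL w))
    (2 + ‖Complex.log (limL w)‖) n0 ?_
  have he : Tendsto Complex.exp (nhds x) (nhds w) := Complex.continuous_exp.continuousAt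
  have hc : ∀ᶠ z in nhds w, ‖limL z - limL w‖ < ‖limL w‖ / 4 := by
    have : ContinuousAt (fun z => ‖limL z - limL w‖) w := (hcL.sub_const _).norm
    exact this.eventually_lt continuousAt_const (by simpa using hL4)
  filter_upwards [he.eventually hn0, he.eventually hc] with z hz1 hz2 n hn
  refine ⟨differentiableAt_const _, ?_, ?_⟩
  · refine (norm_add_le _ _).trans ?_
    rw [Complex.norm_real, Real.norm_eq_abs]
    have h1 := abs_log_lawK_le' n
    have h2 := mul_nonneg (norm_nonneg (Complex.log (limL w))) (n.cast_nonneg (α := ℝ))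
    linarith
  · have hK : (lawK (n + 1) : ℂ) ≠ 0 := by exact_mod_cast (lawK_pos n).ne'
    rw [neg_add, Complex.exp_add, Complex.exp_neg, Complex.exp_neg, Complex.exp_log hL,
      ← Complex.ofReal_exp, Real.exp_log (lawK_pos n)]
    have : fZ n z * ((lawK (n + 1) : ℂ)⁻¹ * (limL w)⁻¹) - 1
        = (fZ n z / lawK (n + 1) - limL w) / limL w := by field_simp
    rw [this, norm_div, div_le_iff₀ (by positivity)]
    have h3 : ‖fZ n z / lawK (n + 1) - limL w‖ ≤
        ‖fZ n z / lawK (n + 1) - limL (Complex.exp z)‖ + ‖limL (Complex.exp z) - limL w‖ := by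
      simpa using norm_add_le (fZ n z / lawK (n + 1) - limL (Complex.exp z))
        (limL (Complex.exp z) - limL w)
    have h4 := hz1 n hn
    unfold fZ at h3 ⊢
    linarith

lemma fZ_ofReal (n : ℕ) (x : ℝ) : fZ n x = (realZ (n + 1) (Real.exp x) : ℂ) := by
  rw [fZ, ← Complex.ofReal_exp, polyZ_ofReal]

lemma fZ_ofReal_ne (x : ℝ) (n : ℕ) : fZ n x ≠ 0 := by
  rw [fZ_ofReal]
  exact_mod_cast (realZ_pos n (Real.exp_pos x)).ne'

/-- The recursion `polyZ_rec` solved explicitly, with `q = (2w - 1) / w²`. -/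
lemma polyZ_iter (N : ℕ) {w : ℂ} (hw : w ≠ 0) :
    w * polyZ N w * ((2 * w - 1) / w ^ 2) ^ (N + 1) =
      2 - 1 / w - ∑ j ∈ Finset.range N, (lawK (j + 1) : ℂ) * ((2 * w - 1) / w ^ 2) ^ (j + 1) := by
  induction N with
  | zero => simp [polyZ_zero]; field_simp
  | succ N ih =>
    rw [Finset.sum_range_succ, ← sub_sub, ← ih]
    have hrec := polyZ_rec N w
    have : (2 * w - 1) / w ^ 2 * polyZ (N + 1) w = polyZ N w - lawK (N + 1) / w := by
      field_simp; linear_combination hrec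
    rw [pow_succ _ (N + 1)]
    have e : w * polyZ (N + 1) w * (((2 * w - 1) / w ^ 2) ^ (N + 1) * ((2 * w - 1) / w ^ 2))
      = w * ((2 * w - 1) / w ^ 2) ^ (N + 1) * ((2 * w - 1) / w ^ 2 * polyZ (N + 1) w) := by ring
    rw [e, this]
    field_simp

lemma good_neg {x : ℝ} (hx : x < 0) : Good (x : ℂ) := by
  have hn : ‖Complex.exp x‖ < 1 := by
    rw [Complex.norm_exp, Complex.ofReal_re]; exact by simpa using hx
  refine good_of_asym (fZ_ofReal_ne x) ?_ (asymAt_of_norm_lt hn)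
  intro h; rw [h] at hn; simp at hn

/-- In the localised regime `h > 0` one has `0 < q < 1`, so that the right-hand side of `polyZ_iter`
converges to a positive limit and `Z_N` is comparable to `q^{-N}`. The approximate logarithm of
`Z_{n+1}` at `z` is `log y - (n + 2) log q - z`, where `y` is the right-hand side at `x`. -/
lemma good_pos {x : ℝ} (hx : 0 < x) : Good (x : ℂ) := by
  set w0 : ℝ := Real.exp x with hw0
  have hw1 : 1 < w0 := Real.one_lt_exp_iff.mpr hx
  have hwp : 0 < w0 := by linarith
  set q0 : ℝ := (2 * w0 - 1) / w0 ^ 2 with hq0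
  have hqp : 0 < q0 := div_pos (by linarith) (by positivity)
  have hq1 : q0 < 1 := by rw [hq0, div_lt_one (by positivity)]; nlinarith
  set qf : ℂ → ℂ := fun z => (2 * Complex.exp z - 1) / Complex.exp z ^ 2 with hqf
  have hqd : Differentiable ℂ qf := by
    intro z
    exact DifferentiableAt.div (by fun_prop) (by fun_prop) (pow_ne_zero _ (Complex.exp_ne_zero z))
  have hex : Complex.exp x = (w0 : ℂ) := (Complex.ofReal_exp x).symm
  have hqx : qf x = (q0 : ℂ) := by simp only [hqf, hex, hq0]; push_cast; rfl
  set Y : ℕ → ℂ → ℂ := fun N z => 2 - 1 / Complex.exp z -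
    ∑ j ∈ Finset.range N, (lawK (j + 1) : ℂ) * qf z ^ (j + 1) with hY
  set y : ℕ → ℝ := fun N => 2 - 1 / w0 - ∑ j ∈ Finset.range N, lawK (j + 1) * q0 ^ (j + 1) with hy
  have hYx : ∀ N, Y N x = (y N : ℂ) := by
    intro N; simp only [hY, hy, hqx, hex]; push_cast; rfl
  -- `K` has total mass at most `1`, so `2 - 1 / w0 - ∑ K(j) q0^j` is at least `1 - 1 / w0`
  set c : ℝ := 1 - 1 / w0 with hc
  have hc0 : 0 < c := by rw [hc, sub_pos, div_lt_one hwp]; exact hw1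
  have hyc : ∀ N, c ≤ y N := by
    intro N
    have h1 : ∑ j ∈ Finset.range N, lawK (j + 1) * q0 ^ (j + 1) ≤
        ∑ j ∈ Finset.range N, lawK (j + 1) := Finset.sum_le_sum fun j _ =>
      mul_le_of_le_one_right (lawK_pos j).le (pow_le_one₀ hqp.le hq1.le)
    have h2 := sum_lawK_le N
    simp only [hy, hc]; linarith
  have hy2 : ∀ N, y N ≤ 2 := by
    intro N
    have h1 : 0 ≤ ∑ j ∈ Finset.range N, lawK (j + 1) * q0 ^ (j + 1) := Finset.sum_nonneg
      fun j _ => mul_nonneg (lawK_pos j).le (pow_nonneg hqp.le _)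
    have h2 : 0 < 1 / w0 := by positivity
    simp only [hy]; linarith
  obtain ⟨ρ, hρ1, hρ2⟩ := exists_between hq1
  have hρ0 : 0 < ρ := by linarith
  have hnear : ∀ᶠ z in nhds (x : ℂ), ‖qf z‖ < ρ := by
    refine (hqd.continuous.continuousAt.norm).eventually_lt continuousAt_const ?_
    rwa [hqx, Complex.norm_real, Real.norm_of_nonneg hqp.le]
  have hgeo : Summable fun j : ℕ => ρ ^ (j + 1) * 2 :=
    (((summable_nat_add_iff 1).mpr (summable_geometric_of_lt_one hρ0.le hρ2))).mul_right 2
  have hterm : ∀ z, ‖qf z‖ < ρ → ∀ j : ℕ, ‖qf z ^ (j + 1) - qf x ^ (j + 1)‖ ≤ ρ ^ (j + 1) * 2 := by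
    intro z hz j
    refine (norm_sub_le _ _).trans ?_
    rw [norm_pow, norm_pow]
    have h1 : ‖qf z‖ ^ (j + 1) ≤ ρ ^ (j + 1) := pow_le_pow_left₀ (norm_nonneg _) hz.le _
    have h2 : ‖qf x‖ ^ (j + 1) ≤ ρ ^ (j + 1) :=
      pow_le_pow_left₀ (norm_nonneg _) hnear.self_of_nhds.le _
    linarith
  have hD : Tendsto (fun z => ∑' j : ℕ, ‖qf z ^ (j + 1) - qf x ^ (j + 1)‖) (nhds (x : ℂ))
      (nhds 0) := by
    have := tendsto_tsum_of_dominated_convergence (𝓕 := nhds (x : ℂ))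
      (f := fun (z : ℂ) (j : ℕ) => ‖qf z ^ (j + 1) - qf x ^ (j + 1)‖)
      (g := fun _ => (0 : ℝ)) hgeo ?_ ?_
    · simpa using this
    · intro j
      have hcc : Continuous fun z => ‖qf z ^ (j + 1) - qf x ^ (j + 1)‖ :=
        ((hqd.continuous.pow _).sub continuous_const).norm
      simpa using hcc.tendsto (x : ℂ)
    · filter_upwards [hnear] with z hz j
      rw [norm_norm]; exact hterm z hz j
  have hI : ∀ᶠ z in nhds (x : ℂ), ‖1 / Complex.exp z - 1 / Complex.exp x‖ < c / 4 := by
    have hcc : Continuous fun z => ‖1 / Complex.exp z - 1 / Complex.exp x‖ := by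
      have := Complex.exp_ne_zero
      fun_prop (disch := assumption)
    exact hcc.continuousAt.eventually_lt continuousAt_const (by simpa using by positivity)
  have hslit : ∀ᶠ z in nhds (x : ℂ), qf z ∈ Complex.slitPlane := by
    refine hqd.continuous.continuousAt.eventually_mem (Complex.isOpen_slitPlane.mem_nhds ?_)
    rw [hqx]; exact Complex.ofReal_mem_slitPlane.mpr hqp
  set B := ‖Complex.log (qf x)‖ + 1 with hB
  have hlogb : ∀ᶠ z in nhds (x : ℂ), ‖Complex.log (qf z)‖ < B := by
    refine ((hqd.continuous.continuousAt.clog ?_).norm).eventually_lt continuousAt_const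
      (by linarith)
    exact hslit.self_of_nhds
  have hzb : ∀ᶠ z in nhds (x : ℂ), ‖z‖ < ‖(x : ℂ)‖ + 1 :=
    continuous_norm.continuousAt.eventually_lt continuousAt_const (by linarith)
  set A := |Real.log c| + 1 with hA
  have hAy : ∀ N, |Real.log (y N)| ≤ A := by
    intro N
    have h1 := Real.log_le_log hc0 (hyc N)
    have h2 := Real.log_le_log (hc0.trans_le (hyc N)) (hy2 N)
    have h3 := Real.log_two_lt_d9
    have h4 := neg_abs_le (Real.log c)
    have h5 := abs_nonneg (Real.log c)
    rw [abs_le]; constructor <;> linarith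
  refine good_of (fZ_ofReal_ne x)
    (fun n z => (Real.log (y (n + 1)) : ℂ) - ((n + 2 : ℕ) : ℂ) * Complex.log (qf z) - z)
    (A + 2 * B + (‖(x : ℂ)‖ + 1)) 0 ?_
  filter_upwards [hnear, hI, hslit, hlogb, hzb, hD.eventually (gt_mem_nhds (by positivity :
    (0 : ℝ) < c / 4))] with z h1 h2 h3 h4 h5 h6 n _
  refine ⟨?_, ?_, ?_⟩
  · exact ((((hqd z).clog h3).const_mul _).const_sub _).sub differentiableAt_id
  · refine (norm_sub_le _ _).trans ?_
    have e1 := norm_sub_le (Real.log (y (n + 1)) : ℂ) (((n + 2 : ℕ) : ℂ) * Complex.log (qf z))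
    rw [Complex.norm_real, Real.norm_eq_abs, norm_mul, Complex.norm_natCast] at e1
    have e2 := hAy (n + 1)
    have e3 : ((n + 2 : ℕ) : ℝ) * ‖Complex.log (qf z)‖ ≤ ((n + 2 : ℕ) : ℝ) * B := by gcongr
    push_cast at e1 e3 ⊢
    have hn := n.cast_nonneg (α := ℝ)
    have e4 : 0 ≤ A * n := by positivity
    have e5 : 0 ≤ B * n := by positivity
    have e6 : 0 ≤ ‖(x : ℂ)‖ * n := by positivity
    nlinarith
  · have hq0z : qf z ≠ 0 := Complex.slitPlane_ne_zero h3
    have hez := Complex.exp_ne_zero z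
    have hyp : 0 < y (n + 1) := hc0.trans_le (hyc _)
    have hyne : (y (n + 1) : ℂ) ≠ 0 := by exact_mod_cast hyp.ne'
    have hiter : Complex.exp z * fZ n z * qf z ^ (n + 2) = Y (n + 1) z := polyZ_iter (n + 1) hez
    have hE : fZ n z * Complex.exp (-((Real.log (y (n + 1)) : ℂ) -
        ((n + 2 : ℕ) : ℂ) * Complex.log (qf z) - z)) = Y (n + 1) z / y (n + 1) := by
      rw [show -((Real.log (y (n + 1)) : ℂ) - ((n + 2 : ℕ) : ℂ) * Complex.log (qf z) - z) =
        -(Real.log (y (n + 1)) : ℂ) + ((n + 2 : ℕ) : ℂ) * Complex.log (qf z) + z by ring,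
        Complex.exp_add, Complex.exp_add, Complex.exp_neg, ← Complex.ofReal_exp,
        Real.exp_log hyp, Complex.exp_nat_mul, Complex.exp_log hq0z, ← hiter]
      field_simp
    rw [hE, div_sub_one hyne, norm_div, Complex.norm_real, Real.norm_of_nonneg hyp.le,
      div_le_iff₀ hyp, ← hYx]
    have hsm : Summable fun j : ℕ => ‖qf z ^ (j + 1) - qf x ^ (j + 1)‖ :=
      Summable.of_nonneg_of_le (fun _ => norm_nonneg _) (hterm z h1) hgeo
    have hdiff : Y (n + 1) z - Y (n + 1) x = -(1 / Complex.exp z - 1 / Complex.exp x) -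
        ∑ j ∈ Finset.range (n + 1), (lawK (j + 1) : ℂ) * (qf z ^ (j + 1) - qf x ^ (j + 1)) := by
      simp only [hY, mul_sub, Finset.sum_sub_distrib]; ring
    have hs : ‖∑ j ∈ Finset.range (n + 1), (lawK (j + 1) : ℂ) *
        (qf z ^ (j + 1) - qf x ^ (j + 1))‖ ≤ c / 4 := by
      refine (norm_sum_le _ _).trans ?_
      refine le_trans (Finset.sum_le_sum fun j _ => ?_)
        ((hsm.sum_le_tsum (Finset.range (n + 1)) fun _ _ => norm_nonneg _).trans h6.le)
      rw [norm_mul, Complex.norm_real, Real.norm_of_nonneg (lawK_pos j).le]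
      exact mul_le_of_le_one_left (norm_nonneg _) (lawK_le_one j)
    rw [hdiff]
    refine (norm_sub_le _ _).trans ?_
    rw [norm_neg]
    have := hyc (n + 1)
    linarith

lemma analyticAt_potU {p : ℝ} (hp : p ∈ Set.Ioo (0 : ℝ) 1) {x : ℝ} (h : Good (x : ℂ)) :
    AnalyticAt ℝ (fun t : ℝ => potU p t) x := by
  obtain ⟨δ, hδ, -, G, hG, hU⟩ := h.spec hp
  have h1 : AnalyticAt ℂ G (x : ℂ) :=
    hG.analyticAt (Metric.isOpen_ball.mem_nhds (Metric.mem_ball_self hδ))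
  refine h1.re_ofReal.congr ?_
  have hc : ∀ᶠ t : ℝ in nhds x, (t : ℂ) ∈ Metric.ball (x : ℂ) δ :=
    Complex.continuous_ofReal.continuousAt.eventually_mem
      (Metric.isOpen_ball.mem_nhds (Metric.mem_ball_self hδ))
  filter_upwards [hc] with t ht
  exact (hU _ ht).symm

/-! ### Smoothness: moments of the number of contacts -/

/-- Unnormalised `j`-th moment of the number of contacts, `∑_k k^j e^{kh} P(k contacts)`. -/
noncomputable def momS (j n : ℕ) (h : ℝ) : ℝ :=
  ∑ k ∈ Finset.range (n + 2), conv k (n + 1) * (k : ℝ) ^ j * Real.exp (k * h)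

/-- The `j`-th moment of the number of contacts under the pinning measure. -/
noncomputable def momM (j n : ℕ) (h : ℝ) : ℝ := momS j n h / momS 0 n h

lemma momS_zero (n : ℕ) (h : ℝ) : momS 0 n h = realZ (n + 1) (Real.exp h) := by
  unfold momS realZ
  refine Finset.sum_congr rfl fun k _ => ?_
  rw [pow_zero, mul_one, Real.exp_nat_mul]

lemma momS_zero_pos (n : ℕ) (h : ℝ) : 0 < momS 0 n h := by
  rw [momS_zero]; exact realZ_pos n (Real.exp_pos h)

lemma hasDerivAt_momS (j n : ℕ) (h : ℝ) : HasDerivAt (momS j n) (momS (j + 1) n h) h := by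
  unfold momS
  refine HasDerivAt.fun_sum fun k _ => ?_
  have h1 : HasDerivAt (fun x : ℝ => Real.exp ((k : ℝ) * x)) (Real.exp (k * h) * (k * 1)) h :=
    ((hasDerivAt_id h).const_mul (k : ℝ)).exp
  have h2 := h1.const_mul (conv k (n + 1) * (k : ℝ) ^ j)
  refine h2.congr_deriv ?_
  ring

/-- Differentiating a moment produces a covariance with the number of contacts. -/
lemma hasDerivAt_momM (j n : ℕ) (h : ℝ) :
    HasDerivAt (momM j n) (momM (j + 1) n h - momM j n h * momM 1 n h) h := by
  have hne := (momS_zero_pos n h).ne'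
  refine ((hasDerivAt_momS j n h).div (hasDerivAt_momS 0 n h) hne).congr_deriv ?_
  unfold momM
  rw [zero_add]
  field_simp

/-- There are at most `n + 1` contacts. -/
lemma momM_bound (j n : ℕ) (h : ℝ) : |momM j n h| ≤ ((n : ℝ) + 1) ^ j := by
  have h0 : 0 ≤ momS j n h := Finset.sum_nonneg fun k _ =>
    mul_nonneg (mul_nonneg (conv_nonneg _ _) (by positivity)) (Real.exp_pos _).le
  rw [momM, abs_of_nonneg (div_nonneg h0 (momS_zero_pos n h).le), div_le_iff₀ (momS_zero_pos n h),
    momS, momS, Finset.mul_sum]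
  refine Finset.sum_le_sum fun k hk => ?_
  have hk' : (k : ℝ) ≤ (n : ℝ) + 1 := by
    exact_mod_cast (show k ≤ n + 1 by have := Finset.mem_range.mp hk; omega)
  have h1 : (k : ℝ) ^ j ≤ ((n : ℝ) + 1) ^ j := pow_le_pow_left₀ (by positivity) hk' j
  have h2 : 0 ≤ conv k (n + 1) * Real.exp (k * h) :=
    mul_nonneg (conv_nonneg _ _) (Real.exp_pos _).le
  have := mul_le_mul_of_nonneg_right h1 h2
  rw [pow_zero, mul_one]
  linarith

lemma contDiff_momM (j n : ℕ) : ContDiff ℝ (⊤ : ℕ∞) (momM j n) := by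
  have hS : ∀ j, ContDiff ℝ (⊤ : ℕ∞) (momS j n) := by
    intro j; unfold momS; fun_prop
  exact (hS j).div (hS 0) fun h => (momS_zero_pos n h).ne'

/-- Differentiating a moment stays within products of moments, so every derivative of a moment is
polynomially bounded in the system size, uniformly in `h`. -/
lemma iterated_momM_bound (k : ℕ) : ∀ j, ∃ C : ℝ, 0 ≤ C ∧ ∃ m : ℕ, ∀ i ≤ k, ∀ n h,
    ‖iteratedFDeriv ℝ i (momM j n) h‖ ≤ C * ((n : ℝ) + 1) ^ m := by
  induction k with
  | zero =>
    intro j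
    refine ⟨1, zero_le_one, j, fun i hi n h => ?_⟩
    obtain rfl : i = 0 := by omega
    rw [norm_iteratedFDeriv_zero, one_mul]
    exact momM_bound j n h
  | succ k ih =>
    intro j
    obtain ⟨C0, hC0, m0, h0⟩ := ih j
    obtain ⟨C1, hC1, m1, h1⟩ := ih 1
    obtain ⟨C2, hC2, m2, h2⟩ := ih (j + 1)
    refine ⟨C0 + (C2 + 2 ^ k * (C0 * C1)), by positivity, m0 + m1 + m2, fun i hi n h => ?_⟩
    have hn : (1 : ℝ) ≤ (n : ℝ) + 1 := by linarith [n.cast_nonneg (α := ℝ)]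
    have hp0 : ((n : ℝ) + 1) ^ m0 ≤ ((n : ℝ) + 1) ^ (m0 + m1 + m2) :=
      pow_le_pow_right₀ hn (by omega)
    have hp2 : ((n : ℝ) + 1) ^ m2 ≤ ((n : ℝ) + 1) ^ (m0 + m1 + m2) :=
      pow_le_pow_right₀ hn (by omega)
    have hp01 : ((n : ℝ) + 1) ^ (m0 + m1) ≤ ((n : ℝ) + 1) ^ (m0 + m1 + m2) :=
      pow_le_pow_right₀ hn (by omega)
    have hx : 0 ≤ (2 : ℝ) ^ k * (C0 * C1) := by positivity
    have e0 := mul_le_mul_of_nonneg_left hp0 hC0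
    have e2 := mul_le_mul_of_nonneg_left hp2 hC2
    have e01 := mul_le_mul_of_nonneg_left hp01 hx
    rcases Nat.lt_or_eq_of_le hi with hlt | rfl
    · have := h0 i (by omega) n h
      have : 0 ≤ C2 * ((n : ℝ) + 1) ^ (m0 + m1 + m2) := by positivity
      have : 0 ≤ 2 ^ k * (C0 * C1) * ((n : ℝ) + 1) ^ (m0 + m1 + m2) := by positivity
      linarith
    · have hd : deriv (momM j n) = momM (j + 1) n - fun y => momM j n y * momM 1 n y := by
        funext y; exact (hasDerivAt_momM j n y).deriv
      have hc : ∀ j, ContDiff ℝ (k : ℕ∞) (momM j n) := fun j =>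
        (contDiff_momM j n).of_le (by exact_mod_cast le_top)
      rw [norm_iteratedFDeriv_eq_norm_iteratedDeriv, iteratedDeriv_succ', hd,
        ← norm_iteratedFDeriv_eq_norm_iteratedDeriv,
        iteratedFDeriv_sub (hc (j + 1)) ((hc j).mul (hc 1)), Pi.sub_apply]
      refine (norm_sub_le _ _).trans ?_
      have hl := norm_iteratedFDeriv_mul_le (contDiff_momM j n) (contDiff_momM 1 n) h (n := k)
        (by exact_mod_cast le_top)
      have hl2 : ∑ i ∈ Finset.range (k + 1), (k.choose i : ℝ) *
          ‖iteratedFDeriv ℝ i (momM j n) h‖ * ‖iteratedFDeriv ℝ (k - i) (momM 1 n) h‖ ≤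
          ∑ i ∈ Finset.range (k + 1), (k.choose i : ℝ) *
            (C0 * C1 * ((n : ℝ) + 1) ^ (m0 + m1)) := by
        refine Finset.sum_le_sum fun i hi => ?_
        have hik := Finset.mem_range.mp hi
        have a := h0 i (by omega) n h
        have b := h1 (k - i) (by omega) n h
        have := mul_le_mul a b (norm_nonneg _) (by positivity)
        rw [mul_assoc]
        refine mul_le_mul_of_nonneg_left (this.trans_eq ?_) (by positivity)
        rw [pow_add]; ring
      rw [← Finset.sum_mul] at hl2
      have hch : ∑ i ∈ Finset.range (k + 1), (k.choose i : ℝ) = 2 ^ k := by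
        exact_mod_cast Nat.sum_range_choose k
      rw [hch] at hl2
      have := h2 k le_rfl n h
      have : 0 ≤ C0 * ((n : ℝ) + 1) ^ (m0 + m1 + m2) := by positivity
      linarith

lemma norm_fZ_ofReal (n : ℕ) (x : ℝ) : ‖fZ n x‖ = momS 0 n x := by
  rw [fZ_ofReal, Complex.norm_real, Real.norm_of_nonneg (realZ_pos n (Real.exp_pos x)).le,
    momS_zero]

/-- Uniform upper bound on the logarithm of the partition function on a disc. -/
lemma log_norm_fZ_le (n : ℕ) {R : ℝ} (hR : 0 ≤ R) {h : ℂ} (hh : ‖h‖ ≤ R) :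
    Real.log ‖fZ n h‖ ≤ (2 + R) * (n + 1) := by
  have hn := n.cast_nonneg (α := ℝ)
  have h0 : 0 ≤ (2 + R) * ((n : ℝ) + 1) := by positivity
  rcases eq_or_ne (fZ n h) 0 with h1 | h1
  · rw [h1]; simpa using h0
  have h2 : ‖Complex.exp h‖ ≤ Real.exp R := by
    rw [Complex.norm_exp]
    exact Real.exp_le_exp.mpr ((Complex.re_le_norm h).trans hh)
  have h3 := Real.log_le_log (norm_pos_iff.mpr h1)
    (norm_polyZ_le n (Complex.exp h) (Real.one_le_exp hR) h2)
  refine h3.trans ?_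
  rw [Real.log_mul (by positivity) (by positivity), Real.log_mul (by positivity) (by positivity),
    Real.log_pow, Real.log_exp]
  have h4 := Real.log_le_sub_one_of_pos (show (0 : ℝ) < n + 2 by positivity)
  have h5 := Real.log_le_sub_one_of_pos (show (0 : ℝ) < n + 1 by positivity)
  push_cast
  linarith

lemma abs_log_momS_zero (n : ℕ) : |Real.log (momS 0 n 0)| ≤ 2 * ((n : ℝ) + 1) := by
  rw [abs_le]
  constructor
  · have h1 : lawK (n + 1) ≤ momS 0 n 0 := by
      have := le_realZ n one_pos
      rw [mul_one] at this
      rwa [momS_zero, Real.exp_zero]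
    have h2 := Real.log_le_log (lawK_pos n) h1
    have h3 := abs_le.mp (abs_log_lawK_le' n)
    linarith [h3.1]
  · have := log_norm_fZ_le n le_rfl (h := ((0 : ℝ) : ℂ)) (by simp)
    rw [norm_fZ_ofReal] at this
    linarith

/-- Every derivative of `log Z_{n+1}` is bounded by a polynomial in `n`, uniformly in `h`, so the
series weighted by `p^n` can be differentiated term by term. -/
lemma contDiff_potU {p : ℝ} (hp : p ∈ Set.Ioo (0 : ℝ) 1) :
    ContDiff ℝ (⊤ : ℕ∞) (fun x : ℝ => potU p x) := by
  have heq : (fun x : ℝ => potU p x) = fun x => ∑' n : ℕ, p ^ n * Real.log (momS 0 n x) := by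
    funext x
    simp only [potU, norm_fZ_ofReal]
  have hder : ∀ x, HasDerivAt (fun x => ∑' n : ℕ, p ^ n * Real.log (momS 0 n x))
      (∑' n : ℕ, p ^ n * momM 1 n x) x := by
    refine hasDerivAt_tsum (summable_lin hp 1) (fun n y => ?_) (fun n y => ?_) (y₀ := 0) ?_
    · exact ((hasDerivAt_momS 0 n y).log (momS_zero_pos n y).ne').const_mul _
    · rw [norm_mul, norm_pow, Real.norm_of_nonneg hp.1.le]
      exact mul_le_mul_of_nonneg_left (momM_bound 1 n y) (pow_nonneg hp.1.le n)
    · refine Summable.of_norm_bounded ((summable_lin hp 1).mul_left 2) fun n => ?_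
      rw [norm_mul, norm_pow, Real.norm_of_nonneg hp.1.le, Real.norm_eq_abs, pow_one]
      have := mul_le_mul_of_nonneg_left (abs_log_momS_zero n) (pow_nonneg hp.1.le n)
      linarith
  rw [heq, contDiff_infty_iff_deriv]
  refine ⟨fun x => (hder x).differentiableAt, ?_⟩
  have hd : deriv (fun x => ∑' n : ℕ, p ^ n * Real.log (momS 0 n x)) =
      fun x => ∑' n : ℕ, (p ^ n • momM 1 n) x := by
    funext x; exact (hder x).deriv
  rw [hd]
  choose C hC m hm using fun k => iterated_momM_bound k 1
  refine contDiff_tsum (v := fun k (n : ℕ) => C k * (p ^ n * ((n : ℝ) + 1) ^ m k))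
    (fun n : ℕ => (contDiff_momM 1 n).const_smul (p ^ n)) (fun k _ => (summable_lin hp (m k)).mul_left _)
    (fun k n x _ => ?_)
  rw [iteratedFDeriv_const_smul_apply
    ((contDiff_momM 1 n).of_le (by exact_mod_cast le_top)).contDiffAt, norm_smul, norm_pow,
    Real.norm_of_nonneg hp.1.le]
  have := mul_le_mul_of_nonneg_left (hm k k le_rfl n x) (pow_nonneg hp.1.le n)
  linarith

/-! ### Complex zeros accumulating at the critical point -/

lemma tendsto_lawK : Tendsto (fun n => lawK (n + 1)) atTop (nhds 0) :=
  (summable_of_sum_range_le (fun n => (lawK_pos n).le) sum_lawK_le).tendsto_atTop_zero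

/-- The points `1/(1+u)` and `1/(1-u)` share the same `q = 1 - u²`, so the two instances of
`polyZ_iter` differ only by `2u`. Hence `Z_N` vanishes at `1/(1-u)` as soon as its counterpart at
`1/(1+u)`, where the asymptotics of `Z_N` are known, has the stated value. -/
lemma polyZ_eq_zero {N : ℕ} {u : ℂ} (h1 : 1 + u ≠ 0) (h2 : 1 - u ≠ 0)
    (h : 1 / (1 + u) * polyZ N (1 / (1 + u)) * (1 - u ^ 2) ^ (N + 1) = -(2 * u)) :
    polyZ N (1 / (1 - u)) = 0 := by
  have hq : (1 : ℂ) - u ^ 2 ≠ 0 := by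
    have : (1 : ℂ) - u ^ 2 = (1 + u) * (1 - u) := by ring
    rw [this]; exact mul_ne_zero h1 h2
  have e1 : (2 * (1 / (1 + u)) - 1) / (1 / (1 + u)) ^ 2 = 1 - u ^ 2 := by field_simp; ring
  have e2 : (2 * (1 / (1 - u)) - 1) / (1 / (1 - u)) ^ 2 = 1 - u ^ 2 := by field_simp; ring
  have i1 := polyZ_iter N (one_div_ne_zero h1)
  have i2 := polyZ_iter N (one_div_ne_zero h2)
  rw [e1, one_div_one_div] at i1
  rw [e2, one_div_one_div] at i2
  have i3 : 1 / (1 - u) * polyZ N (1 / (1 - u)) * (1 - u ^ 2) ^ (N + 1) = 0 := by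
    linear_combination i2 - i1 + h
  rcases mul_eq_zero.mp i3 with h3 | h3
  · exact (mul_eq_zero.mp h3).resolve_left (one_div_ne_zero h2)
  · exact absurd h3 (pow_ne_zero _ hq)

/-- Points of the unit circle close to, but different from, `1`. -/
lemma exists_circle_point {ε : ℝ} (hε : 0 < ε) : ∃ φ : ℝ, 0 < φ ∧
    0 < (1 - Complex.exp (φ * Complex.I)).re ∧ ‖1 - Complex.exp (φ * Complex.I)‖ < ε := by
  have hc : Continuous fun φ : ℝ => ‖1 - Complex.exp (φ * Complex.I)‖ := by fun_prop
  have h1 : ∀ᶠ φ : ℝ in nhds 0, ‖1 - Complex.exp (φ * Complex.I)‖ < ε :=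
    hc.continuousAt.eventually_lt continuousAt_const (by simpa using hε)
  have h2 : ∀ᶠ φ : ℝ in nhds 0, φ < π := gt_mem_nhds Real.pi_pos
  have h3 : ∀ᶠ φ : ℝ in nhdsWithin 0 (Set.Ioi 0),
      (‖1 - Complex.exp (φ * Complex.I)‖ < ε ∧ φ < π) ∧ 0 < φ :=
    ((h1.and h2).filter_mono nhdsWithin_le_nhds).and eventually_mem_nhdsWithin
  obtain ⟨φ, ⟨a, b⟩, c⟩ := h3.exists
  refine ⟨φ, c, ?_, a⟩
  have := Real.cos_lt_cos_of_nonneg_of_le_pi le_rfl b.le c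
  rw [Real.cos_zero] at this
  rw [Complex.sub_re, Complex.one_re, Complex.exp_ofReal_mul_I_re]
  linarith

/-- Zeros of the `Z_N` accumulate at the critical point, which in the coordinate `w = 1/(1+v)` is
`v = 0`. Writing `v = -u` and `1 - u² = e^ζ`, the asymptotics at `1/(1+u)` turn the equation of
`polyZ_eq_zero` into `e^{(N+1)ζ} K(N) (1 + o(1)) / (2u³) = -1`. Up to a correction of order
`log N / N` this asks `ζ` to be an odd multiple of `iπ / (N+1)`, so there are solutions near any point
of the imaginary axis. Because `K(N)` tends to `0`, they satisfy `|e^ζ| > 1`, that is,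
`|1 - v²| > 1`. -/
lemma exists_zero_near {r : ℝ} (hr : 0 < r) : ∃ v : ℂ, 0 < ‖v‖ ∧ ‖v‖ < r ∧ 1 < ‖1 - v ^ 2‖ ∧
    ∃ n, polyZ (n + 1) (1 / (1 + v)) = 0 := by
  obtain ⟨φ, hφ, hφre, hφn⟩ := exists_circle_point (ε := min (r ^ 2) 1) (by positivity)
  set ζ0 : ℂ := φ * Complex.I with hζ0
  set s : ℂ → ℂ := fun ζ => 1 - Complex.exp ζ with hs
  set u : ℂ → ℂ := fun ζ => Complex.exp (Complex.log (s ζ) / 2) with hu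
  have hsd : Differentiable ℂ s := by intro z; fun_prop
  have hslit : ∀ ζ, 0 < (s ζ).re → s ζ ∈ Complex.slitPlane := fun ζ h => Or.inl h
  have hu2 : ∀ ζ, 0 < (s ζ).re → u ζ ^ 2 = s ζ := by
    intro ζ h
    rw [hu, ← Complex.exp_nat_mul]
    push_cast
    rw [mul_div_cancel₀ _ two_ne_zero, Complex.exp_log (Complex.slitPlane_ne_zero (hslit ζ h))]
  have hure : ∀ ζ, 0 < (s ζ).re → 0 < (u ζ).re := by
    intro ζ h
    simp only [hu]
    rw [Complex.exp_re]
    refine mul_pos (Real.exp_pos _) (Real.cos_pos_of_mem_Ioo ?_)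
    have e : (Complex.log (s ζ) / 2).im = (s ζ).arg / 2 := by
      rw [← Complex.log_im]; simp
    have hm := abs_lt.mp (Complex.abs_arg_lt_pi_div_two_iff.mpr (Or.inl h))
    have := Real.pi_pos
    rw [e]
    constructor <;> linarith [hm.1, hm.2]
  have hud : ∀ ζ, 0 < (s ζ).re → DifferentiableAt ℂ u ζ := fun ζ h =>
    (((hsd ζ).clog (hslit ζ h)).div_const 2).cexp
  set w : ℂ → ℂ := fun ζ => 1 / (1 + u ζ) with hw
  have h1u : ∀ ζ, 0 < (s ζ).re → 1 < ‖1 + u ζ‖ := by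
    intro ζ h
    refine lt_of_lt_of_le ?_ (Complex.re_le_norm _)
    have := hure ζ h
    simp; linarith
  have h1u0 : ∀ ζ, 0 < (s ζ).re → 1 + u ζ ≠ 0 := fun ζ hs h => by
    have := h1u ζ hs; rw [h, norm_zero] at this; linarith
  have hw1 : ∀ ζ, 0 < (s ζ).re → ‖w ζ‖ < 1 := by
    intro ζ h
    simp only [hw]
    rw [norm_div, norm_one, div_lt_one (by linarith [h1u ζ h])]
    exact h1u ζ h
  have hwd : ∀ ζ, 0 < (s ζ).re → DifferentiableAt ℂ w ζ := fun ζ h =>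
    (differentiableAt_const 1).div ((hud ζ h).const_add 1) (h1u0 ζ h)
  obtain ⟨n0, hn0⟩ := asymAt_of_norm_lt (hw1 ζ0 hφre) (1 / 2) (by norm_num)
  set B := ‖Complex.log (s ζ0)‖ + 1 with hB
  have hB0 : 0 < B := by positivity
  set c := ‖u ζ0‖ / 2 with hc
  have hu0 : ∀ ζ, u ζ ≠ 0 := fun ζ => Complex.exp_ne_zero _
  have hc0 : 0 < c := by have := norm_pos_iff.mpr (hu0 ζ0); positivity
  have ev1 : ∀ᶠ ζ in nhds ζ0, 0 < (s ζ).re :=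
    continuousAt_const.eventually_lt
      (Complex.continuous_re.continuousAt.comp hsd.continuous.continuousAt) hφre
  have ev2 : ∀ᶠ ζ in nhds ζ0, ‖s ζ‖ < min (r ^ 2) 1 :=
    hsd.continuous.continuousAt.norm.eventually_lt continuousAt_const hφn
  have ev3 : ∀ᶠ ζ in nhds ζ0, ‖Complex.log (s ζ)‖ < B :=
    (hsd.continuous.continuousAt.clog (hslit _ hφre)).norm.eventually_lt continuousAt_const
      (by linarith)
  have ev4 : ∀ᶠ ζ in nhds ζ0, c < ‖u ζ‖ :=
    continuousAt_const.eventually_lt (hud ζ0 hφre).continuousAt.norm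
      (by have := norm_pos_iff.mpr (hu0 ζ0); rw [hc]; linarith)
  have ev5 := (hwd ζ0 hφre).continuousAt.eventually hn0
  obtain ⟨δ', hδ', hP⟩ := Metric.eventually_nhds_iff_ball.mp
    (ev1.and (ev2.and (ev3.and (ev4.and ev5))))
  set δ := δ' / 2 with hδd
  have hδ : 0 < δ := by positivity
  -- `u² w L(w) = 1` for `w = 1/(1+u)`, so `R n` is close to `1`
  set R : ℕ → ℂ → ℂ := fun n ζ =>
    u ζ ^ 2 * w ζ * (polyZ (n + 1) (w ζ) / lawK (n + 1)) with hR
  have hR1 : ∀ n ≥ n0, ∀ ζ ∈ Metric.ball ζ0 δ', ‖R n ζ - 1‖ ≤ 1 / 2 := by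
    intro n hn ζ hζ
    obtain ⟨a1, a2, -, -, a5⟩ := hP ζ hζ
    have e : R n ζ - 1 = u ζ ^ 2 * w ζ * (polyZ (n + 1) (w ζ) / lawK (n + 1) - limL (w ζ)) := by
      have : u ζ ^ 2 * w ζ * limL (w ζ) = 1 := by
        simp only [hw, limL]
        have := h1u0 ζ a1
        have := hu0 ζ
        have e2 : 1 - 1 / (1 + u ζ) = u ζ / (1 + u ζ) := by field_simp; ring
        rw [e2]
        field_simp
      rw [mul_sub, this]
    rw [e, norm_mul, norm_mul, hu2 ζ a1]
    have b1 : ‖s ζ‖ ≤ 1 := a2.le.trans (min_le_right _ _)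
    have b2 := mul_le_one₀ b1 (norm_nonneg _) (hw1 ζ a1).le
    exact (mul_le_of_le_one_left (norm_nonneg _) b2).trans (a5 n hn)
  -- a holomorphic logarithm of `K(n+1) R / (2u³)`
  set Ln : ℕ → ℂ → ℂ := fun n ζ => (Real.log (lawK (n + 1)) : ℂ) + Complex.log (R n ζ) -
    3 * (Complex.log (s ζ) / 2) - Complex.log 2 with hLn
  have hLexp : ∀ n ≥ n0, ∀ ζ ∈ Metric.ball ζ0 δ',
      Complex.exp (Ln n ζ) = lawK (n + 1) * R n ζ / (2 * u ζ ^ 3) := by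
    intro n hn ζ hζ
    simp only [hLn]
    rw [Complex.exp_sub, Complex.exp_sub, Complex.exp_add, ← Complex.ofReal_exp,
      Real.exp_log (lawK_pos n), Complex.exp_log two_ne_zero,
      Complex.exp_log (Complex.slitPlane_ne_zero (slit_of_near_one (hR1 n hn ζ hζ))),
      show (3 : ℂ) * (Complex.log (s ζ) / 2) = (3 : ℕ) * (Complex.log (s ζ) / 2) by norm_num,
      Complex.exp_nat_mul]
    rw [div_div, mul_comm (2 : ℂ)]
  have hLbd : ∀ n ≥ n0, ∀ ζ ∈ Metric.ball ζ0 δ',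
      ‖Ln n ζ‖ ≤ 2 * Real.log (n + 2) + (4 + 2 * B) := by
    intro n hn ζ hζ
    obtain ⟨a1, -, a3, -, -⟩ := hP ζ hζ
    have b1 := norm_log_le (hR1 n hn ζ hζ)
    have b2 := abs_log_lawK_le n
    have b3 : Real.log ((n : ℝ) + 1) ≤ Real.log (n + 2) :=
      Real.log_le_log (by positivity) (by linarith)
    have b4 : ‖(3 : ℂ) * (Complex.log (s ζ) / 2)‖ ≤ 2 * B := by
      rw [norm_mul, norm_div]; norm_num; linarith [norm_nonneg (Complex.log (s ζ))]
    have b5 : ‖Complex.log 2‖ ≤ 1 := by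
      have : Complex.log 2 = (Real.log 2 : ℂ) := by
        rw [Complex.ofReal_log (by norm_num)]; norm_num
      rw [this, Complex.norm_real, Real.norm_of_nonneg (Real.log_nonneg (by norm_num))]
      linarith [Real.log_two_lt_d9]
    have b6 : ‖(Real.log (lawK (n + 1)) : ℂ)‖ ≤ 1 + 2 * Real.log (n + 2) := by
      rw [Complex.norm_real, Real.norm_eq_abs]; linarith
    simp only [hLn]
    have t1 := norm_sub_le ((Real.log (lawK (n + 1)) : ℂ) + Complex.log (R n ζ) -
      3 * (Complex.log (s ζ) / 2)) (Complex.log 2)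
    have t2 := norm_sub_le ((Real.log (lawK (n + 1)) : ℂ) + Complex.log (R n ζ))
      (3 * (Complex.log (s ζ) / 2))
    have t3 := norm_add_le (Real.log (lawK (n + 1)) : ℂ) (Complex.log (R n ζ))
    linarith
  have hRd : ∀ n, ∀ ζ ∈ Metric.ball ζ0 δ', DifferentiableAt ℂ (R n) ζ := by
    intro n ζ hζ
    obtain ⟨a1, -⟩ := hP ζ hζ
    exact (((hud ζ a1).pow 2).mul (hwd ζ a1)).mul
      (((differentiable_polyZ (n + 1) _).comp ζ (hwd ζ a1)).div_const _)
  have hLd : ∀ n ≥ n0, ∀ ζ ∈ Metric.ball ζ0 δ', DifferentiableAt ℂ (Ln n) ζ := by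
    intro n hn ζ hζ
    obtain ⟨a1, -⟩ := hP ζ hζ
    exact ((((hRd n ζ hζ).clog (slit_of_near_one (hR1 n hn ζ hζ))).const_add _).sub
      ((((hsd ζ).clog (hslit ζ a1)).div_const 2).const_mul 3)).sub_const _
  -- `n` is taken large enough for the correction `Ln n / (n + 2)` and the spacing of the odd
  -- multiples of `iπ / (n + 2)` to be small compared with `δ`
  have hT : Tendsto (fun n : ℕ => (n : ℝ) + 2) atTop atTop :=
    tendsto_atTop_add_const_right _ _ tendsto_natCast_atTop_atTop
  have lim1 : Tendsto (fun n : ℕ => 2 * (Real.log ((n : ℝ) + 2) / (n + 2)) +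
      (4 + 2 * B) / (n + 2)) atTop (nhds 0) := by
    have h1 := (Real.isLittleO_log_id_atTop.tendsto_div_nhds_zero.comp hT).const_mul 2
    have h2 : Tendsto (fun n : ℕ => (4 + 2 * B) / ((n : ℝ) + 2)) atTop (nhds 0) :=
      tendsto_const_nhds.div_atTop hT
    simpa using h1.add h2
  have lim2 : Tendsto (fun n : ℕ => π / ((n : ℝ) + 2)) atTop (nhds 0) :=
    tendsto_const_nhds.div_atTop hT
  have hδ16 : 0 < δ / 16 := by positivity
  obtain ⟨n, hn, c1, c2, c3⟩ := ((eventually_ge_atTop n0).and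
    ((lim1.eventually (gt_mem_nhds hδ16)).and ((lim2.eventually (gt_mem_nhds hδ16)).and
      (tendsto_lawK.eventually (gt_mem_nhds (pow_pos hc0 3)))))).exists
  have hn2 : (0 : ℝ) < (n : ℝ) + 2 := by positivity
  have hn2c : ((n : ℂ) + 2) ≠ 0 := by exact_mod_cast hn2.ne'
  -- The equation to solve is `H ζ = τ`, with `τ` an odd multiple of `iπ / (n + 2)`. As `H` is
  -- uniformly close to the identity, the quantitative open mapping theorem applies.
  set H : ℂ → ℂ := fun ζ => ζ + Ln n ζ / (n + 2) with hH
  have hHs : ∀ ζ ∈ Metric.ball ζ0 δ', ‖H ζ - ζ‖ ≤ δ / 16 := by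
    intro ζ hζ
    simp only [hH, add_sub_cancel_left]
    have e : ‖(n : ℂ) + 2‖ = (n : ℝ) + 2 := by
      rw [show (n : ℂ) + 2 = ((n + 2 : ℝ) : ℂ) by push_cast; rfl, Complex.norm_real,
        Real.norm_of_nonneg hn2.le]
    rw [norm_div, e]
    refine le_trans ?_ c1.le
    rw [← mul_div_assoc, ← add_div]
    exact div_le_div_of_nonneg_right (hLbd n hn ζ hζ) hn2.le
  have hHd : ∀ ζ ∈ Metric.ball ζ0 δ', DifferentiableAt ℂ H ζ := fun ζ hζ =>
    differentiableAt_id.add ((hLd n hn ζ hζ).div_const _)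
  have hζ0m : ζ0 ∈ Metric.ball ζ0 δ' := Metric.mem_ball_self hδ'
  have hcb : Metric.closedBall ζ0 δ ⊆ Metric.ball ζ0 δ' :=
    Metric.closedBall_subset_ball (by rw [hδd]; linarith)
  have hH0 := hHs ζ0 hζ0m
  have hsph : ∀ z ∈ Metric.sphere ζ0 δ, δ / 2 ≤ ‖H z - H ζ0‖ := by
    intro z hz
    have h1 := hHs z (hcb (Metric.sphere_subset_closedBall hz))
    have h2 : ‖z - ζ0‖ = δ := by simpa [dist_eq_norm] using hz
    have h3 : ‖z - ζ0‖ ≤ ‖H z - H ζ0‖ + ‖H z - z‖ + ‖H ζ0 - ζ0‖ := by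
      have : z - ζ0 = (H z - H ζ0) - (H z - z) + (H ζ0 - ζ0) := by ring
      rw [this]
      exact (norm_add_le _ _).trans (by gcongr; exact norm_sub_le _ _)
    linarith
  have hnc : ∃ᶠ z in nhds ζ0, H z ≠ H ζ0 := by
    intro hcon
    have han : AnalyticOnNhd ℂ H (Metric.ball ζ0 δ') :=
      DifferentiableOn.analyticOnNhd (fun z hz => (hHd z hz).differentiableWithinAt)
        Metric.isOpen_ball
    have heq := han.eqOn_of_preconnected_of_eventuallyEq (g := fun _ => H ζ0)
      analyticOnNhd_const (convex_ball ζ0 δ').isPreconnected hζ0m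
      (hcon.mono fun z hz => not_not.mp hz)
    have hzs : ζ0 + (δ : ℂ) ∈ Metric.sphere ζ0 δ := by
      simp [abs_of_pos hδ]
    have h1 := hsph _ hzs
    rw [heq (hcb (Metric.sphere_subset_closedBall hzs)), sub_self, norm_zero] at h1
    linarith
  have hdc : DiffContOnCl ℂ H (Metric.ball ζ0 δ) := by
    refine DifferentiableOn.diffContOnCl_ball (U := Metric.ball ζ0 δ') ?_ hcb
    exact fun z hz => (hHd z hz).differentiableWithinAt
  have himg := hdc.ball_subset_image_closedBall hδ hsph hnc
  set k : ℕ := ⌊((n : ℝ) + 2) * φ / (2 * π)⌋₊ with hk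
  set τ : ℂ := ((π * (2 * k + 1) / (n + 2) : ℝ) : ℂ) * Complex.I with hτ
  have hpi := Real.pi_pos
  have hτ0 : ‖τ - ζ0‖ ≤ π / (n + 2) := by
    rw [hτ, hζ0, ← sub_mul, ← Complex.ofReal_sub, norm_mul, Complex.norm_I, mul_one,
      Complex.norm_real, Real.norm_eq_abs]
    have f1 := Nat.floor_le (show 0 ≤ ((n : ℝ) + 2) * φ / (2 * π) by positivity)
    have f2 := Nat.lt_floor_add_one (((n : ℝ) + 2) * φ / (2 * π))
    rw [← hk] at f1 f2
    rw [le_div_iff₀ (by positivity)] at f1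
    rw [div_lt_iff₀ (by positivity)] at f2
    have e : π * (2 * k + 1) / (n + 2) - φ = (π * (2 * k + 1) - (n + 2) * φ) / (n + 2) := by
      field_simp
    rw [e, abs_div, abs_of_pos hn2]
    gcongr
    rw [abs_le]; constructor <;> linarith
  have hτm : τ ∈ Metric.ball (H ζ0) (δ / 2 / 2) := by
    rw [Metric.mem_ball, dist_eq_norm]
    have : τ - H ζ0 = (τ - ζ0) - (H ζ0 - ζ0) := by ring
    rw [this]
    have := norm_sub_le (τ - ζ0) (H ζ0 - ζ0)
    linarith
  obtain ⟨ζ, hζ, hHζ⟩ := himg hτm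
  have hζm := hcb hζ
  obtain ⟨a1, a2, a3, a4, a5⟩ := hP ζ hζm
  have hq : 1 - u ζ ^ 2 = Complex.exp ζ := by rw [hu2 ζ a1]; simp only [hs]; ring
  have hexp : Complex.exp ζ ^ (n + 2) * (lawK (n + 1) * R n ζ / (2 * u ζ ^ 3)) = -1 := by
    rw [← hLexp n hn ζ hζm, ← Complex.exp_nat_mul, ← Complex.exp_add]
    have e1 : ((n + 2 : ℕ) : ℂ) * ζ + Ln n ζ = (n + 2) * τ := by
      rw [← hHζ]; simp only [hH]; push_cast; field_simp
    have e2 : ((n : ℂ) + 2) * τ = π * Complex.I + (k : ℂ) * (2 * π * Complex.I) := by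
      rw [hτ]; push_cast; field_simp; ring
    rw [e1, e2, Complex.exp_add, Complex.exp_nat_mul_two_pi_mul_I, Complex.exp_pi_mul_I, mul_one]
  have hK : (lawK (n + 1) : ℂ) ≠ 0 := by exact_mod_cast (lawK_pos n).ne'
  have hu0' := hu0 ζ
  have h1mu : 1 - u ζ ≠ 0 := by
    intro h
    have : Complex.exp ζ = 0 := by
      rw [← hq, show u ζ = 1 by linear_combination -h]; norm_num
    exact Complex.exp_ne_zero _ this
  have hnu : ‖u ζ‖ ^ 2 = ‖s ζ‖ := by rw [← norm_pow, hu2 ζ a1]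
  refine ⟨-u ζ, by simpa using norm_pos_iff.mpr hu0', ?_, ?_, n, ?_⟩
  · rw [norm_neg]
    refine lt_of_pow_lt_pow_left₀ 2 hr.le ?_
    rw [hnu]; exact a2.trans_le (min_le_left _ _)
  · rw [neg_sq, hq]
    -- otherwise the left-hand side of `hexp` has modulus less than `1`
    by_contra hle
    push Not at hle
    have h1 : ‖Complex.exp ζ‖ ^ (n + 2) ≤ 1 := pow_le_one₀ (norm_nonneg _) hle
    have h2 : ‖R n ζ‖ ≤ 3 / 2 := by
      have := norm_add_le (R n ζ - 1) 1
      rw [sub_add_cancel, norm_one] at this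
      linarith [hR1 n hn ζ hζm]
    have h3 := congrArg norm hexp
    generalize R n ζ = ρ at h2 h3
    rw [norm_mul, norm_pow, norm_div, norm_mul, norm_mul, Complex.norm_real,
      Real.norm_of_nonneg (lawK_pos n).le, norm_neg, norm_one, norm_pow, Complex.norm_two] at h3
    have h4 : c ^ 3 < ‖u ζ‖ ^ 3 := pow_lt_pow_left₀ a4 hc0.le (by norm_num)
    have h5 : lawK (n + 1) * ‖ρ‖ / (2 * ‖u ζ‖ ^ 3) < 1 := by
      rw [div_lt_one (by positivity)]
      have := mul_le_mul_of_nonneg_left h2 (lawK_pos n).le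
      have := pow_pos hc0 3
      linarith
    have h6 : 0 ≤ lawK (n + 1) * ‖ρ‖ / (2 * ‖u ζ‖ ^ 3) :=
      div_nonneg (mul_nonneg (lawK_pos n).le (norm_nonneg _)) (by positivity)
    have := mul_le_mul_of_nonneg_right h1 h6
    linarith
  · rw [← sub_eq_add_neg]
    refine polyZ_eq_zero (h1u0 ζ a1) h1mu ?_
    rw [hq]
    have e : (lawK (n + 1) : ℂ) * R n ζ = u ζ ^ 2 * (1 / (1 + u ζ) * polyZ (n + 1) (1 / (1 + u ζ))) := by
      have := h1u0 ζ a1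
      simp only [hR, hw]; field_simp
    rw [e] at hexp
    field_simp at hexp ⊢
    linear_combination hexp

/-! ### The singularity at the critical point -/

/-- A function that is real-analytic at `0` extends holomorphically to a complex disc. -/
lemma exists_complex_ext {f : ℝ → ℝ} (hf : AnalyticAt ℝ f 0) : ∃ R > 0, ∃ F : ℂ → ℂ,
    DifferentiableOn ℂ F (Metric.ball 0 R) ∧ ∀ x : ℝ, |x| < R → F x = f x := by
  obtain ⟨a, r, h⟩ := hf
  obtain ⟨R, hR0, hRr⟩ := ENNReal.lt_iff_exists_nnreal_btwn.mp h.r_pos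
  have hRp : (0 : ℝ) < R := by exact_mod_cast hR0
  have hs := a.summable_norm_mul_pow (hRr.trans_le h.r_le)
  have hbd : ∀ n, ∀ z ∈ Metric.ball (0 : ℂ) R, ‖(a.coeff n : ℂ) * z ^ n‖ ≤ ‖a n‖ * (R : ℝ) ^ n := by
    intro n z hz
    rw [mem_ball_zero_iff] at hz
    rw [norm_mul, norm_pow, Complex.norm_real, FormalMultilinearSeries.norm_apply_eq_norm_coef]
    gcongr
  refine ⟨R, hRp, fun z => ∑' n, (a.coeff n : ℂ) * z ^ n, ?_, fun x hx => ?_⟩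
  · exact Complex.differentiableOn_tsum_of_summable_norm hs (fun n => by fun_prop)
      Metric.isOpen_ball hbd
  · have hx' : x ∈ Metric.eball (0 : ℝ) r := by
      refine Metric.eball_subset_eball hRr.le ?_
      rw [Metric.eball_coe, mem_ball_zero_iff]
      exact hx
    have h1 := h.hasSum hx'
    rw [zero_add] at h1
    have h2 := Complex.hasSum_ofReal.mpr h1
    rw [← h2.tsum_eq]
    refine tsum_congr fun n => ?_
    rw [FormalMultilinearSeries.apply_eq_pow_smul_coeff, smul_eq_mul]
    push_cast
    ring

lemma fZ_conj (n : ℕ) (z : ℂ) : fZ n (starRingEnd ℂ z) = starRingEnd ℂ (fZ n z) := by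
  simp only [fZ, polyZ, map_sum, map_mul, map_pow, Complex.conj_ofReal, Complex.exp_conj]

lemma potU_conj (p : ℝ) (z : ℂ) : potU p (starRingEnd ℂ z) = potU p z := by
  simp only [potU, fZ_conj, RCLike.norm_conj]

lemma Good.summable {p : ℝ} (hp : p ∈ Set.Ioo (0 : ℝ) 1) {x : ℂ} (h : Good x) :
    Summable fun n : ℕ => p ^ n * Real.log ‖fZ n x‖ := by
  obtain ⟨δ, hδ, C, g, hg⟩ := h
  refine Summable.of_norm_bounded ((summable_lin hp 1).mul_left C) fun n => ?_
  obtain ⟨h1, h2⟩ := (hg n).2 x (Metric.mem_ball_self hδ)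
  rw [← h1, Complex.norm_exp, Real.log_exp, norm_mul, norm_pow, Real.norm_of_nonneg hp.1.le,
    Real.norm_eq_abs]
  have := mul_le_mul_of_nonneg_left ((Complex.abs_re_le_norm _).trans h2) (pow_nonneg hp.1.le n)
  linarith

/-- One small partition function pulls the whole potential down. -/
lemma Good.potU_le {p : ℝ} (hp : p ∈ Set.Ioo (0 : ℝ) 1) (N : ℕ) : ∃ C : ℝ, ∀ x : ℂ, Good x →
    ‖x‖ ≤ 1 → potU p x ≤ p ^ N * Real.log ‖fZ N x‖ + C := by
  have hs := (summable_lin hp 1).mul_left 3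
  refine ⟨∑' n : ℕ, 3 * (p ^ n * ((n : ℝ) + 1) ^ 1) - p ^ N * (3 * (N + 1)), fun x hx hx1 => ?_⟩
  have hi := hasSum_ite_eq N (p ^ N * Real.log ‖fZ N x‖ - p ^ N * (3 * (N + 1)))
  have hb := hs.hasSum.add hi
  have := hasSum_le (fun n => ?_) (hx.summable hp).hasSum hb
  · rw [potU]; linarith
  · split_ifs with h
    · subst h; apply le_of_eq; ring
    · have h1 := log_norm_fZ_le n zero_le_one hx1
      have := mul_le_mul_of_nonneg_left h1 (pow_nonneg hp.1.le n)
      linarith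

/-- The interior of the set where the potential is the real part of `F`. -/
def matchSet (p : ℝ) (F : ℂ → ℂ) : Set ℂ := {h | ∀ᶠ z in nhds h, potU p z = (F z).re}

lemma isOpen_matchSet (p : ℝ) (F : ℂ → ℂ) : IsOpen (matchSet p F) := by
  rw [isOpen_iff_mem_nhds]
  intro x hx
  exact eventually_eventually_nhds.mpr hx

/-- Two holomorphic functions whose real parts agree near one point have real parts agreeing on
the whole disc. -/
lemma re_eq_on_ball {D : ℂ → ℂ} {x y : ℂ} {δ : ℝ} (hD : DifferentiableOn ℂ D (Metric.ball x δ))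
    (hy : y ∈ Metric.ball x δ) (h : ∀ᶠ z in nhds y, (D z).re = 0) :
    ∀ z ∈ Metric.ball x δ, (D z).re = 0 := by
  have hn : ∀ z, (D z).re = 0 ↔ ‖Complex.exp (D z)‖ = 1 := by
    intro z; rw [Complex.norm_exp, Real.exp_eq_one_iff]
  have hE : DifferentiableOn ℂ (fun z => Complex.exp (D z)) (Metric.ball x δ) := hD.cexp
  have hmax : IsLocalMax (norm ∘ fun z => Complex.exp (D z)) y := by
    filter_upwards [h] with z hz
    simp only [Function.comp]
    rw [(hn z).mp hz, (hn y).mp h.self_of_nhds]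
  have hc := Complex.eventually_eq_of_isLocalMax_norm
    (hE.eventually_differentiableAt (Metric.isOpen_ball.mem_nhds hy)) hmax
  have := (hE.analyticOnNhd Metric.isOpen_ball).eqOn_of_preconnected_of_eventuallyEq
    (g := fun _ => Complex.exp (D y)) analyticOnNhd_const (convex_ball x δ).isPreconnected hy hc
  intro z hz
  have e : Complex.exp (D z) = Complex.exp (D y) := this hz
  rw [hn, e, ← hn]
  exact h.self_of_nhds

/-- `matchSet` is relatively closed in the set of `Good` points of the disc where `F` is holomorphic. -/
lemma mem_matchSet_of_closure {p : ℝ} (hp : p ∈ Set.Ioo (0 : ℝ) 1) {F : ℂ → ℂ} {R : ℝ}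
    (hF : DifferentiableOn ℂ F (Metric.ball 0 R)) {x : ℂ} (hx : Good x)
    (hxR : x ∈ Metric.ball (0 : ℂ) R) (hcl : x ∈ closure (matchSet p F)) : x ∈ matchSet p F := by
  obtain ⟨δ, hδ, -, G, hG, hU⟩ := hx.spec hp
  obtain ⟨δ', hδ', hsub⟩ := Metric.isOpen_iff.mp Metric.isOpen_ball x hxR
  have h1 : Metric.ball x (min δ δ') ⊆ Metric.ball x δ := Metric.ball_subset_ball (min_le_left _ _)
  have h2 : Metric.ball x (min δ δ') ⊆ Metric.ball 0 R :=
    (Metric.ball_subset_ball (min_le_right _ _)).trans hsub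
  have hpos : 0 < min δ δ' := lt_min hδ hδ'
  obtain ⟨y, hyb, hyS⟩ := mem_closure_iff_nhds.mp hcl _
    (Metric.isOpen_ball.mem_nhds (Metric.mem_ball_self hpos))
  have hD := (hG.mono h1).sub (hF.mono h2)
  have hz := re_eq_on_ball hD hyb (by
    filter_upwards [hyS, Metric.isOpen_ball.mem_nhds hyb] with z hz hzb
    rw [Pi.sub_apply, Complex.sub_re, ← hU z (h1 hzb), hz, sub_self])
  refine Filter.mem_of_superset (Metric.isOpen_ball.mem_nhds (Metric.mem_ball_self hpos)) ?_
  intro z hzb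
  have := hz z hzb
  rw [Pi.sub_apply, Complex.sub_re] at this
  show potU p z = _
  rw [hU z (h1 hzb)]
  linarith

/-- Near a real `Good` point the potential is the real part of any holomorphic extension of its
restriction to the reals. Symmetrising under complex conjugation removes the imaginary part of
the local primitive on the real line. -/
lemma mem_matchSet_real {p : ℝ} (hp : p ∈ Set.Ioo (0 : ℝ) 1) {F : ℂ → ℂ} {R : ℝ}
    (hF : DifferentiableOn ℂ F (Metric.ball 0 R)) (hFr : ∀ x : ℝ, |x| < R → F x = potU p x)
    {x : ℝ} (hx : Good (x : ℂ)) (hxR : |x| < R) : (x : ℂ) ∈ matchSet p F := by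
  obtain ⟨δ, hδ, -, G, hG, hU⟩ := hx.spec hp
  set H : ℂ → ℂ := fun z => (G z + starRingEnd ℂ (G (starRingEnd ℂ z))) / 2 with hH
  have hball : ∀ z ∈ Metric.ball (x : ℂ) δ, starRingEnd ℂ z ∈ Metric.ball (x : ℂ) δ := by
    intro z hz
    rw [Metric.mem_ball, dist_eq_norm] at hz ⊢
    rwa [← Complex.conj_ofReal x, ← map_sub, RCLike.norm_conj]
  have hGd : ∀ z ∈ Metric.ball (x : ℂ) δ, DifferentiableAt ℂ G z := fun z hz =>
    hG.differentiableAt (Metric.isOpen_ball.mem_nhds hz)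
  have hHd : DifferentiableOn ℂ H (Metric.ball (x : ℂ) δ) := by
    intro z hz
    have h1 := (hGd _ (hball z hz)).conj_conj
    rw [Complex.conj_conj] at h1
    exact (((hGd z hz).add h1).div_const 2).differentiableWithinAt
  have hre : ∀ z ∈ Metric.ball (x : ℂ) δ, (H z).re = potU p z := by
    intro z hz
    have h1 := hU z hz
    have h2 := hU _ (hball z hz)
    rw [potU_conj] at h2
    have : (H z).re = ((G z).re + (G (starRingEnd ℂ z)).re) / 2 := by
      simp [hH]
    rw [this, ← h1, ← h2]; ring
  have hreal : ∀ t : ℝ, (t : ℂ) ∈ Metric.ball (x : ℂ) δ → H t = potU p t := by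
    intro t ht
    apply Complex.ext
    · rw [hre t ht, Complex.ofReal_re]
    · simp [hH]
  have hxb : (x : ℂ) ∈ Metric.ball (x : ℂ) δ := Metric.mem_ball_self hδ
  have hxR' : (x : ℂ) ∈ Metric.ball (0 : ℂ) R := by
    rw [mem_ball_zero_iff, Complex.norm_real]; exact hxR
  have hHa := hHd.analyticAt (Metric.isOpen_ball.mem_nhds hxb)
  have hFa := hF.analyticAt (Metric.isOpen_ball.mem_nhds hxR')
  have hofr : Tendsto (fun t : ℝ => (t : ℂ)) (nhdsWithin x {x}ᶜ) (nhdsWithin (x : ℂ) {(x : ℂ)}ᶜ) := by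
    refine tendsto_nhdsWithin_of_tendsto_nhds_of_eventually_within _
      (Complex.continuous_ofReal.continuousAt.tendsto.mono_left nhdsWithin_le_nhds) ?_
    filter_upwards [eventually_mem_nhdsWithin] with t ht
    simpa using ht
  have hfr : ∃ᶠ z in nhdsWithin (x : ℂ) {(x : ℂ)}ᶜ, H z = F z := by
    refine hofr.frequently (Eventually.frequently ?_)
    have c1 : ∀ᶠ t : ℝ in nhds x, (t : ℂ) ∈ Metric.ball (x : ℂ) δ :=
      Complex.continuous_ofReal.continuousAt.eventually_mem (Metric.isOpen_ball.mem_nhds hxb)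
    have c2 : ∀ᶠ t : ℝ in nhds x, |t| < R :=
      continuous_abs.continuousAt.eventually_lt continuousAt_const hxR
    filter_upwards [nhdsWithin_le_nhds c1, nhdsWithin_le_nhds c2] with t h1 h2
    rw [hreal t h1, hFr t h2]
  have heq := (hHa.frequently_eq_iff_eventually_eq hFa).mp hfr
  filter_upwards [heq, Metric.isOpen_ball.mem_nhds hxb] with z hz hzb
  rw [← hre z hzb, hz]

/-- On a circle `‖v‖ = const`, the modulus of `1 - v²` increases as `(v.re)²` decreases. -/
lemma normSq_one_sub_sq (v : ℂ) : ‖1 - v ^ 2‖ ^ 2 = (1 + ‖v‖ ^ 2) ^ 2 - 4 * v.re ^ 2 := by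
  rw [← Complex.normSq_eq_norm_sq, ← Complex.normSq_eq_norm_sq]
  simp only [Complex.normSq_apply, Complex.sub_re, Complex.sub_im, Complex.one_re, Complex.one_im,
    pow_two, Complex.mul_re, Complex.mul_im]
  ring

/-- On the arc of a circle around `v = 0` going from the positive axis to `v1`, where
`|1 - v1²| > 1`, one of the two asymptotic regimes always applies. -/
lemma asymAt_arc {v v1 : ℂ} (hv : 1 + v ≠ 0) (hv1 : v1 ≠ 0) (hn : ‖v‖ = ‖v1‖)
    (hre : v1.re ≤ v.re) (h1 : 1 < ‖1 - v1 ^ 2‖) : AsymAt (1 / (1 + v)) := by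
  rcases le_or_gt 0 v.re with h0 | h0
  · apply asymAt_of_norm_lt
    have : 1 < ‖1 + v‖ := by
      refine lt_of_pow_lt_pow_left₀ 2 (norm_nonneg _) ?_
      have hp : 0 < ‖v‖ := by rw [hn]; exact norm_pos_iff.mpr hv1
      have hq : 0 < ‖v‖ ^ 2 := by positivity
      rw [← Complex.normSq_eq_norm_sq, Complex.normSq_apply] at hq ⊢
      simp only [Complex.add_re, Complex.add_im, Complex.one_re, Complex.one_im]
      nlinarith
    rw [norm_div, norm_one, div_lt_one (by linarith)]
    exact this
  · apply asymAt_of_one_lt (one_div_ne_zero hv)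
    have e : (2 * (1 / (1 + v)) - 1) / (1 / (1 + v)) ^ 2 = 1 - v ^ 2 := by field_simp; ring
    rw [e]
    refine h1.trans_le (le_of_sq_le_sq ?_ (norm_nonneg _))
    rw [normSq_one_sub_sq, normSq_one_sub_sq, hn]
    nlinarith

/-- A holomorphic extension `F` of the potential would satisfy `potU = Re F` along an arc leading from
the real axis to a zero of some `Z_M`, where the potential tends to `-∞`. -/
lemma not_analyticAt_potU {p : ℝ} (hp : p ∈ Set.Ioo (0 : ℝ) 1) :
    ¬ AnalyticAt ℝ (fun x : ℝ => potU p x) 0 := by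
  intro han
  obtain ⟨R, hR, F, hF, hFr⟩ := exists_complex_ext han
  obtain ⟨v1, hv10, hv1r, hv1q, N, hN⟩ := exists_zero_near (r := min (1 / 2) (R / 2)) (by positivity)
  have hv1h : ‖v1‖ < 1 / 2 := hv1r.trans_le (min_le_left _ _)
  have hv1R : ‖v1‖ < R / 2 := hv1r.trans_le (min_le_right _ _)
  have hv1ne : v1 ≠ 0 := norm_pos_iff.mp hv10
  -- `V` runs along the circle from the positive axis to `v1`, and `γ` is the arc in the variable
  -- `h` with `e^h = 1/(1+v)`
  set V : ℝ → ℂ := fun s => ‖v1‖ * Complex.exp ((s * v1.arg : ℝ) * Complex.I) with hV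
  have hVc : Continuous V := by fun_prop
  have hVn : ∀ s, ‖V s‖ = ‖v1‖ := by
    intro s
    simp only [hV]
    rw [norm_mul, Complex.norm_exp_ofReal_mul_I, mul_one, Complex.norm_real, norm_norm]
  have hV0 : V 0 = (‖v1‖ : ℂ) := by simp [hV]
  have hV1 : V 1 = v1 := by
    simp only [hV, one_mul]; exact Complex.norm_mul_exp_arg_mul_I v1
  have hVre : ∀ s ∈ Set.Icc (0 : ℝ) 1, v1.re ≤ (V s).re := by
    intro s hs
    have e : ∀ t, (V t).re = ‖v1‖ * Real.cos (t * v1.arg) := by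
      intro t
      simp only [hV]
      rw [Complex.re_ofReal_mul, Complex.exp_ofReal_mul_I_re]
    have e1 : v1.re = ‖v1‖ * Real.cos v1.arg := by
      have := e 1
      rwa [hV1, one_mul] at this
    rw [e1, e, ← Real.cos_abs v1.arg, ← Real.cos_abs (s * v1.arg), abs_mul, abs_of_nonneg hs.1]
    refine mul_le_mul_of_nonneg_left ?_ (norm_nonneg _)
    refine Real.cos_le_cos_of_nonneg_of_le_pi (by have := hs.1; positivity)
      (Complex.abs_arg_le_pi v1) (mul_le_of_le_one_left (abs_nonneg _) hs.2)
  have hslit : ∀ s, 1 + V s ∈ Complex.slitPlane := fun s =>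
    Complex.mem_slitPlane_of_norm_lt_one (by rw [hVn]; linarith)
  have hne : ∀ s, 1 + V s ≠ 0 := fun s => Complex.slitPlane_ne_zero (hslit s)
  set γ : ℝ → ℂ := fun s => -Complex.log (1 + V s) with hγ
  have hγc : Continuous γ := (Continuous.clog (by fun_prop) hslit).neg
  have hγe : ∀ s, Complex.exp (γ s) = 1 / (1 + V s) := by
    intro s
    simp only [hγ]
    rw [Complex.exp_neg, Complex.exp_log (hne s), one_div]
  have hγn : ∀ s, ‖γ s‖ ≤ 3 / 2 * ‖v1‖ := by
    intro s
    simp only [hγ]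
    rw [norm_neg, ← hVn s]
    exact Complex.norm_log_one_add_half_le_self (by rw [hVn]; linarith)
  have hγR : ∀ s, γ s ∈ Metric.ball (0 : ℂ) R := by
    intro s; rw [mem_ball_zero_iff]; linarith [hγn s]
  have hγgood : ∀ s ∈ Set.Icc (0 : ℝ) 1, (∀ n, fZ n (γ s) ≠ 0) → Good (γ s) := by
    intro s hs hnz
    refine good_of_asym hnz ?_ ?_
    · rw [hγe]
      intro h
      have h2 : V s = 0 := by
        rw [div_eq_one_iff_eq (hne s)] at h; linear_combination -h
      have := hVn s
      rw [h2, norm_zero] at this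
      linarith
    · rw [hγe]
      exact asymAt_arc (hne s) hv1ne (hVn s) (hVre s hs) hv1q
  -- `T` collects the parameters at which some `Z_N` vanishes; its least element `t1` is the first
  -- zero met along the arc
  set T : Set ℝ := {s | s ∈ Set.Icc (0 : ℝ) 1 ∧ ∃ n, fZ n (γ s) = 0} with hT
  have hTclosed : IsClosed T := by
    rw [← isOpen_compl_iff, isOpen_iff_mem_nhds]
    intro s hs
    by_cases hsI : s ∈ Set.Icc (0 : ℝ) 1
    · have hnz : ∀ n, fZ n (γ s) ≠ 0 := fun n h => hs ⟨hsI, n, h⟩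
      obtain ⟨δ, hδ, hb, -⟩ := (hγgood s hsI hnz).spec hp
      have := hγc.continuousAt.eventually_mem
        (Metric.isOpen_ball.mem_nhds (Metric.mem_ball_self (x := γ s) hδ))
      filter_upwards [this] with t ht
      rintro ⟨-, n, hn⟩
      exact hb _ ht n hn
    · filter_upwards [isClosed_Icc.isOpen_compl.mem_nhds hsI] with t ht h
      exact ht h.1
  have hTcomp : IsCompact T := isCompact_Icc.of_isClosed_subset hTclosed fun s hs => hs.1
  have hT1 : (1 : ℝ) ∈ T := by
    refine ⟨by simp, N, ?_⟩
    rw [fZ, hγe, hV1, hN]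
  obtain ⟨t1, ⟨ht1I, M, hM⟩, ht1min⟩ := hTcomp.exists_isLeast ⟨1, hT1⟩
  have hγ0 : γ 0 = ((-Real.log (1 + ‖v1‖) : ℝ) : ℂ) := by
    simp only [hγ, hV0]
    rw [Complex.ofReal_neg, Complex.ofReal_log (by positivity)]
    push_cast; rfl
  have ht1pos : 0 < t1 := by
    rcases ht1I.1.lt_or_eq with h | h
    · exact h
    · rw [← h, hγ0] at hM
      exact absurd hM (fZ_ofReal_ne _ M)
  have hgood : ∀ s ∈ Set.Ico (0 : ℝ) t1, Good (γ s) := by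
    intro s hs
    have hsI : s ∈ Set.Icc (0 : ℝ) 1 := ⟨hs.1, hs.2.le.trans ht1I.2⟩
    refine hγgood s hsI fun n hn => ?_
    exact absurd (ht1min ⟨hsI, n, hn⟩) (not_le.mpr hs.2)
  have h0mem : (0 : ℝ) ∈ Set.Ico (0 : ℝ) t1 := ⟨le_rfl, ht1pos⟩
  have hstart : γ 0 ∈ matchSet p F := by
    have hg := hgood 0 h0mem
    have hr := hγR 0
    rw [hγ0] at hg hr ⊢
    rw [mem_ball_zero_iff, Complex.norm_real] at hr
    exact mem_matchSet_real hp hF (fun x hx => hFr x hx) hg hr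
  have hpre : IsPreconnected (γ '' Set.Ico (0 : ℝ) t1) :=
    isPreconnected_Ico.image γ hγc.continuousOn
  have hsub : γ '' Set.Ico (0 : ℝ) t1 ⊆ matchSet p F := by
    refine hpre.subset_of_closure_inter_subset (isOpen_matchSet p F)
      ⟨γ 0, ⟨0, h0mem, rfl⟩, hstart⟩ ?_
    rintro _ ⟨hcl, s, hs, rfl⟩
    exact mem_matchSet_of_closure hp hF (hgood s hs) (hγR s) hcl
  -- just before `t1` the potential is arbitrarily negative, while `(F ∘ γ).re` stays bounded
  obtain ⟨C, hC⟩ := Good.potU_le hp M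
  have hpM : 0 < p ^ M := pow_pos hp.1 M
  set A : ℝ := (C - (F (γ t1)).re + 1) / p ^ M with hA
  have hFc : ContinuousAt (fun s => (F (γ s)).re) t1 := by
    have h1 : ContinuousAt F (γ t1) :=
      (hF.differentiableAt (Metric.isOpen_ball.mem_nhds (hγR t1))).continuousAt
    exact Complex.continuous_re.continuousAt.comp (h1.comp hγc.continuousAt)
  have ev1 : ∀ᶠ s in nhds t1, (F (γ t1)).re - 1 < (F (γ s)).re :=
    continuousAt_const.eventually_lt hFc (by linarith)
  have ev2 : ∀ᶠ s in nhds t1, ‖fZ M (γ s)‖ < Real.exp (-A) := by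
    refine ContinuousAt.eventually_lt ?_ continuousAt_const ?_
    · exact (((differentiable_fZ M).continuous.comp hγc).norm).continuousAt
    · rw [hM, norm_zero]; exact Real.exp_pos _
  have ev3 : ∀ᶠ s in nhds t1, 0 < s := lt_mem_nhds ht1pos
  have hev : ∀ᶠ s in nhdsWithin t1 (Set.Iio t1), (((F (γ t1)).re - 1 < (F (γ s)).re ∧
      ‖fZ M (γ s)‖ < Real.exp (-A)) ∧ 0 < s) ∧ s < t1 :=
    (((ev1.and ev2).and ev3).filter_mono nhdsWithin_le_nhds).and eventually_mem_nhdsWithin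
  obtain ⟨s, ⟨⟨a1, a2⟩, a3⟩, a4⟩ := hev.exists
  have hsm : s ∈ Set.Ico (0 : ℝ) t1 := ⟨a3.le, a4⟩
  have hU : potU p (γ s) = (F (γ s)).re := (hsub ⟨s, hsm, rfl⟩ : γ s ∈ matchSet p F).self_of_nhds
  have hg := hgood s hsm
  have hup := hC _ hg (by linarith [hγn s])
  obtain ⟨δ, hδ, hnz, -⟩ := hg.spec hp
  have hpos := norm_pos_iff.mpr (hnz _ (Metric.mem_ball_self hδ) M)
  have hlog : Real.log ‖fZ M (γ s)‖ < -A := (Real.log_lt_iff_lt_exp hpos).mpr a2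
  have h1 := mul_lt_mul_of_pos_left hlog hpM
  have h2 : p ^ M * -A = -(C - (F (γ t1)).re + 1) := by
    rw [hA]; field_simp
  linarith

theorem stmt16 (p : ℝ) (hp : p ∈ Set.Ioo (0 : ℝ) 1) :
    let ftilde : ℝ → ℝ := fun h =>
      ∑' n : ℕ, p ^ n * Real.log ((pinZ (specialK (1 / 2)) (n + 1) (h : ℂ)).re)
    ContDiff ℝ (⊤ : ℕ∞) ftilde ∧
    (∀ h : ℝ, h ≠ 0 → AnalyticAt ℝ ftilde h) ∧
    ¬ AnalyticAt ℝ ftilde 0 := by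
  intro ftilde
  have hf : ftilde = fun x : ℝ => potU p x := by
    funext x
    refine tsum_congr fun n => ?_
    have h1 : pinZ (specialK (1 / 2)) (n + 1) x = fZ n x := pinZ_eq n x
    rw [h1, norm_fZ_ofReal, momS_zero, fZ_ofReal, Complex.ofReal_re]
  rw [hf]
  refine ⟨contDiff_potU hp, fun h hh => ?_, not_analyticAt_potU hp⟩
  rcases hh.lt_or_gt with h0 | h0
  · exact analyticAt_potU hp (good_neg h0)
  · exact analyticAt_potU hp (good_pos h0)
end

section
/- Let a, c ∈ ℝ and let b ∈ ℝ with b ≠ 0. Then for every continuous function f : ℝ → ℝ which is 2π-periodic (f(t+2π) = f(t) for all t), one has lim_{n→∞} (1/n) ∑_{k=1}^{n} f(a·k + b·√k + c) = (1/(2π)) ∫_0^{2π} f(t) dt; equivalently, the sequence (a·k + b·√k + c) mod 2π equidistributes with respect to the uniform probability measure on the circle ℝ/(2πℤ). -/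
open Filter Real

/-!
By Weyl's criterion it is enough to treat the characters of the circle: trigonometric polynomials
are uniformly dense in the continuous functions (`span_fourier_closure_eq_top`), and the set of
functions whose averages converge to their mean is a closed subspace. What remains is that
`(1/n) ∑ exp (i (α k + β √k)) → 0` for all real `α` and all `β ≠ 0` (`weyl_sum`).

Such an average tends to zero once the summand `x k` is a difference `w (k+1) - w k` up to `o(1)`,
with `w k = o(k)` (`cesaro_of_telescoping`). Put `z = exp (i α)`. The increments of `√k` tend to
zero, so when `z ≠ 1` the choice `w = x / (z - 1)` works, as for a geometric series. When `z = 1`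
the summand is `exp (i β √k)`, and `w k = (2 / (i β)) √k exp (i β √k)`, the leading term of the
antiderivative of `exp (i β √t)`, works.
-/

/-- A sequence that is a discrete derivative of `o(k)` up to an `o(1)` error has mean zero. -/
theorem cesaro_of_telescoping {x w : ℕ → ℂ}
    (h : Tendsto (fun k => w (k + 1) - w k - x k) atTop (nhds 0))
    (hw : Tendsto (fun k : ℕ => (k : ℝ)⁻¹ • w k) atTop (nhds 0)) :
    Tendsto (fun n : ℕ => (n : ℝ)⁻¹ • ∑ k ∈ Finset.range n, x k) atTop (nhds 0) := by
  have h1 := h.cesaro_smul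
  have h2 : Tendsto (fun n : ℕ => (n : ℝ)⁻¹ • w 0) atTop (nhds 0) := by
    simpa using (tendsto_natCast_atTop_atTop (R := ℝ)).inv_tendsto_atTop.smul_const (w 0)
  have h3 := (hw.sub h2).sub h1
  rw [sub_zero, sub_zero] at h3
  refine h3.congr fun n => ?_
  rw [← smul_sub, ← smul_sub, Finset.sum_sub_distrib, Finset.sum_range_sub]
  simp

/-- The square root of `k + 1`; the shift matches sums over `1, …, n` with `Finset.range n`. -/
noncomputable def sqrtSucc (k : ℕ) : ℝ := √((k : ℝ) + 1)

/-- The increment of `sqrtSucc`. -/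
noncomputable def sqrtInc (k : ℕ) : ℝ := sqrtSucc (k + 1) - sqrtSucc k

theorem sqrtSucc_pos (k : ℕ) : 0 < sqrtSucc k := by
  unfold sqrtSucc; positivity

theorem sqrtInc_mul (k : ℕ) : sqrtInc k * (sqrtSucc (k + 1) + sqrtSucc k) = 1 := by
  have h1 := mul_self_sqrt (show 0 ≤ (k : ℝ) + 1 by positivity)
  have h2 := mul_self_sqrt (show 0 ≤ (k : ℝ) + 1 + 1 by positivity)
  simp only [sqrtInc, sqrtSucc, Nat.cast_add, Nat.cast_one]
  linarith

theorem sqrtInc_pos (k : ℕ) : 0 < sqrtInc k := by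
  have h := sqrtInc_mul k
  have h1 := sqrtSucc_pos k
  have h2 := sqrtSucc_pos (k + 1)
  by_contra! hc
  nlinarith

theorem tendsto_sqrtInc : Tendsto sqrtInc atTop (nhds 0) := by
  have h : Tendsto sqrtSucc atTop atTop :=
    tendsto_sqrt_atTop.comp (tendsto_atTop_add_const_right _ _ tendsto_natCast_atTop_atTop)
  refine squeeze_zero (fun k => (sqrtInc_pos k).le) (fun k => ?_) h.inv_tendsto_atTop
  have h1 := sqrtSucc_pos k
  simp only [Pi.inv_apply]
  rw [le_inv_comm₀ (sqrtInc_pos k) h1, ← one_div, le_div_iff₀ (sqrtInc_pos k)]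
  nlinarith [sqrtInc_mul k, sqrtInc_pos k, sqrtSucc_pos (k + 1)]

/-- `√(k+2) (√(k+2) - √(k+1)) → 1/2`. -/
theorem tendsto_sqrtSucc_mul_sqrtInc :
    Tendsto (fun k => sqrtSucc (k + 1) * sqrtInc k) atTop (nhds (1 / 2)) := by
  have h : Tendsto (fun k => (1 + sqrtInc k ^ 2) / 2) atTop (nhds ((1 + 0 ^ 2) / 2)) :=
    ((tendsto_sqrtInc.pow 2).const_add 1).div_const 2
  norm_num at h
  refine (h.congr fun k => ?_).trans_eq (by norm_num)
  have h1 := sqrtInc_mul k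
  have h2 : sqrtSucc (k + 1) - sqrtSucc k = sqrtInc k := rfl
  linear_combination (-1 / 2 : ℝ) * h1 - (sqrtInc k / 2) * h2

theorem tendsto_inv_mul_sqrtSucc :
    Tendsto (fun k : ℕ => (k : ℝ)⁻¹ * sqrtSucc k) atTop (nhds 0) := by
  have h2 : Tendsto (fun n : ℕ => (n : ℝ)⁻¹ * sqrtSucc 0) atTop (nhds 0) := by
    simpa using (tendsto_natCast_atTop_atTop (R := ℝ)).inv_tendsto_atTop.mul_const (sqrtSucc 0)
  -- `√(k+1)` is `√1` plus the sum of the first `k` increments, which tend to zero.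
  have h3 := tendsto_sqrtInc.cesaro.add h2
  rw [add_zero] at h3
  refine h3.congr fun n => ?_
  rw [← mul_add]
  simp only [sqrtInc]
  rw [Finset.sum_range_sub, sub_add_cancel]

theorem tendsto_exp_sqrtInc (β : ℝ) :
    Tendsto (fun k => Complex.exp (Complex.I * β * sqrtInc k)) atTop (nhds 1) := by
  have h : Tendsto (fun k => Complex.exp (Complex.I * β * sqrtInc k)) atTop
      (nhds (Complex.exp (Complex.I * β * (0 : ℝ)))) :=
    (Complex.continuous_exp.tendsto _).comp
      (((Complex.continuous_ofReal.tendsto 0).comp tendsto_sqrtInc).const_mul _)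
  simpa using h

theorem tendsto_exp_sub_one_div_sqrtInc (β : ℝ) :
    Tendsto (fun k => (Complex.exp (Complex.I * β * sqrtInc k) - 1) / sqrtInc k) atTop
      (nhds (Complex.I * β)) := by
  have hd : HasDerivAt (fun t : ℂ => Complex.exp (Complex.I * β * t)) (Complex.I * β) 0 := by
    have h1 : HasDerivAt (fun t : ℂ => Complex.I * β * t) (Complex.I * β) 0 := by
      simpa using (hasDerivAt_id (0 : ℂ)).const_mul (Complex.I * (β : ℂ))
    simpa using h1.cexp
  have ht : Tendsto (fun k => (sqrtInc k : ℂ)) atTop (nhdsWithin 0 {0}ᶜ) := by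
    refine tendsto_nhdsWithin_iff.2 ⟨?_, Eventually.of_forall fun k => ?_⟩
    · simpa [Function.comp_def] using (Complex.continuous_ofReal.tendsto 0).comp tendsto_sqrtInc
    · simpa using (sqrtInc_pos k).ne'
  refine (hd.tendsto_slope.comp ht).congr fun k => ?_
  simp [slope_def_field]

theorem norm_exp_I_mul_ofReal (t : ℝ) : ‖Complex.exp (Complex.I * t)‖ = 1 := by
  rw [mul_comm, Complex.norm_exp_ofReal_mul_I]

theorem weyl_sum (α β : ℝ) (hβ : β ≠ 0) :
    Tendsto (fun n : ℕ => (n : ℝ)⁻¹ • ∑ k ∈ Finset.range n,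
      Complex.exp (Complex.I * (α * ((k : ℝ) + 1) + β * sqrtSucc k : ℝ))) atTop (nhds 0) := by
  set x : ℕ → ℂ := fun k => Complex.exp (Complex.I * (α * ((k : ℝ) + 1) + β * sqrtSucc k : ℝ))
    with hx
  set z : ℂ := Complex.exp (Complex.I * α) with hz
  set e : ℕ → ℂ := fun k => Complex.exp (Complex.I * β * sqrtInc k) with he
  have hxn : ∀ k, ‖x k‖ = 1 := fun k => norm_exp_I_mul_ofReal _
  have hxs : ∀ k, x (k + 1) = x k * (z * e k) := by
    intro k
    simp only [hx, hz, he, ← Complex.exp_add, sqrtInc]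
    congr 1
    push_cast
    ring
  have hee : Tendsto e atTop (nhds 1) := tendsto_exp_sqrtInc β
  -- Multiplication by the unimodular `x k` preserves convergence to zero.
  have hmul : ∀ g : ℕ → ℂ, Tendsto g atTop (nhds 0) →
      Tendsto (fun k => x k * g k) atTop (nhds 0) := by
    intro g hg
    rw [tendsto_zero_iff_norm_tendsto_zero] at hg ⊢
    exact hg.congr fun k => by rw [norm_mul, hxn, one_mul]
  by_cases h1 : z = 1
  · have hb : (β : ℂ) ≠ 0 := by exact_mod_cast hβ
    have hI := Complex.I_ne_zero
    refine cesaro_of_telescoping (w := fun k => x k * (sqrtSucc k * (2 / (Complex.I * β)))) ?_ ?_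
    · have hs : Tendsto (fun k => ((sqrtSucc (k + 1) * sqrtInc k : ℝ) : ℂ)) atTop
          (nhds ((1 / 2 : ℝ) : ℂ)) :=
        (Complex.continuous_ofReal.tendsto _).comp tendsto_sqrtSucc_mul_sqrtInc
      have hd : Tendsto (fun k => ((sqrtInc k : ℝ) : ℂ)) atTop (nhds ((0 : ℝ) : ℂ)) :=
        (Complex.continuous_ofReal.tendsto _).comp tendsto_sqrtInc
      have hlim := ((((hs.mul (tendsto_exp_sub_one_div_sqrtInc β)).add hd).mul_const
        (2 / (Complex.I * β))).sub_const 1)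
      have h0 : (((1 / 2 : ℝ) : ℂ) * (Complex.I * β) + ((0 : ℝ) : ℂ)) * (2 / (Complex.I * β)) - 1
          = 0 := by
        push_cast
        field_simp
        ring
      rw [h0] at hlim
      refine (hmul _ hlim).congr fun k => ?_
      have hk : (sqrtInc k : ℂ) ≠ 0 := by exact_mod_cast (sqrtInc_pos k).ne'
      have hdef : (sqrtInc k : ℂ) = sqrtSucc (k + 1) - sqrtSucc k := by simp [sqrtInc]
      have hq : ((sqrtSucc (k + 1) * sqrtInc k : ℝ) : ℂ) *
          ((Complex.exp (Complex.I * β * sqrtInc k) - 1) / sqrtInc k)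
          = sqrtSucc (k + 1) * (e k - 1) := by
        simp only [he]
        push_cast
        field_simp
      rw [hq, hxs, h1, hdef]
      ring
    · have hs := (Complex.continuous_ofReal.tendsto _).comp tendsto_inv_mul_sqrtSucc
      rw [Complex.ofReal_zero] at hs
      have hlim := hs.mul_const (2 / (Complex.I * β))
      rw [zero_mul] at hlim
      refine (hmul _ hlim).congr fun k => ?_
      rw [Complex.real_smul]
      simp only [Function.comp]
      push_cast
      ring
  · have hz1 : z - 1 ≠ 0 := sub_ne_zero.2 h1
    refine cesaro_of_telescoping (w := fun k => x k * (z - 1)⁻¹) ?_ ?_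
    · have hlim := ((hee.sub_const 1).const_mul (z * (z - 1)⁻¹))
      rw [sub_self, mul_zero] at hlim
      refine (hmul _ hlim).congr fun k => ?_
      rw [hxs]
      field_simp
      ring
    · have hs : Tendsto (fun k : ℕ => (k : ℝ)⁻¹ • (z - 1)⁻¹) atTop (nhds 0) := by
        simpa using
          (tendsto_natCast_atTop_atTop (R := ℝ)).inv_tendsto_atTop.smul_const ((z - 1)⁻¹)
      exact (hmul _ hs).congr fun k => by rw [mul_smul_comm]

/-- Weyl's criterion: if the averages of every nontrivial character along `y` tend to zero, then the
averages of every continuous function tend to its mean, the zeroth Fourier coefficient. -/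
theorem weyl_criterion {T : ℝ} [Fact (0 < T)] (y : ℕ → AddCircle T)
    (hy : ∀ m : ℤ, m ≠ 0 → Tendsto (fun n : ℕ => (n : ℝ)⁻¹ • ∑ k ∈ Finset.range n,
      fourier m (y k)) atTop (nhds 0)) (g : C(AddCircle T, ℂ)) :
    Tendsto (fun n : ℕ => (n : ℝ)⁻¹ • ∑ k ∈ Finset.range n, g (y k)) atTop
      (nhds (fourierCoeff g 0)) := by
  have hint : ∀ p : C(AddCircle T, ℂ),
      MeasureTheory.Integrable p (AddCircle.haarAddCircle (T := T)) := fun p =>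
    p.continuous.integrable_of_hasCompactSupport (HasCompactSupport.of_compactSpace _)
  have hspan : ∀ p ∈ Submodule.span ℂ (Set.range (@fourier T)),
      Tendsto (fun n : ℕ => (n : ℝ)⁻¹ • ∑ k ∈ Finset.range n, p (y k)) atTop
        (nhds (fourierCoeff p 0)) := by
    intro p hp
    induction hp using Submodule.span_induction with
    | mem p hp =>
      obtain ⟨m, rfl⟩ := hp
      rw [fourierCoeff_fourier]
      by_cases hm : m = 0
      · subst hm
        refine tendsto_const_nhds.congr' ?_
        filter_upwards [eventually_gt_atTop 0] with n hn
        have : (n : ℂ) ≠ 0 := by exact_mod_cast hn.ne'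
        simp [Complex.real_smul, this]
      · simpa [Pi.single_apply, hm, Ne.symm hm] using hy m hm
    | zero => simp [fourierCoeff]
    | add p q _ _ hp hq =>
      rw [ContinuousMap.coe_add, fourierCoeff.add (hint p) (hint q)]
      refine (hp.add hq).congr fun n => ?_
      simp [Finset.sum_add_distrib]
    | smul c p _ hp =>
      rw [ContinuousMap.coe_smul, fourierCoeff.const_smul]
      refine (hp.const_smul c).congr fun n => ?_
      rw [smul_comm, Finset.smul_sum]
      simp
  have hg : g ∈ (Submodule.span ℂ (Set.range (@fourier T))).topologicalClosure := by
    rw [span_fourier_closure_eq_top]; trivial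
  have hg' : g ∈ closure (Submodule.span ℂ (Set.range (@fourier T)) : Set C(AddCircle T, ℂ)) := hg
  rw [Metric.tendsto_atTop]
  intro ε hε
  obtain ⟨p, hp, hgp⟩ := Metric.mem_closure_iff.1 hg' (ε / 3) (by positivity)
  obtain ⟨N, hN⟩ := Metric.tendsto_atTop.1 (hspan p hp) (ε / 3) (by positivity)
  refine ⟨N, fun n hn => ?_⟩
  have hpt : ∀ t, ‖g t - p t‖ ≤ dist g p := fun t => by
    rw [← dist_eq_norm]; exact ContinuousMap.dist_apply_le_dist t
  have hA : dist ((n : ℝ)⁻¹ • ∑ k ∈ Finset.range n, g (y k))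
      ((n : ℝ)⁻¹ • ∑ k ∈ Finset.range n, p (y k)) ≤ dist g p := by
    rw [dist_eq_norm, ← smul_sub, ← Finset.sum_sub_distrib, norm_smul, norm_inv, Real.norm_natCast]
    have h1 : ‖∑ k ∈ Finset.range n, (g (y k) - p (y k))‖ ≤ n * dist g p := by
      refine (norm_sum_le_of_le _ fun k _ => hpt (y k)).trans_eq ?_
      simp
    rcases Nat.eq_zero_or_pos n with rfl | hn0
    · simp
    · rw [inv_mul_le_iff₀ (by exact_mod_cast hn0)]
      exact h1
  have hB : dist (fourierCoeff p 0) (fourierCoeff g 0) ≤ dist g p := by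
    rw [dist_comm, dist_eq_norm]
    simp only [fourierCoeff, neg_zero, fourier_zero, one_smul]
    rw [← MeasureTheory.integral_sub (hint g) (hint p)]
    refine (MeasureTheory.norm_integral_le_of_norm_le_const (Eventually.of_forall hpt)).trans_eq ?_
    simp
  have hC := hN n hn
  calc _ ≤ _ := dist_triangle4 _ _ _ _
    _ < ε / 3 + ε / 3 + ε / 3 := by
        exact add_lt_add (add_lt_add (hA.trans_lt hgp) hC) (hB.trans_lt hgp)
    _ = ε := by ring

theorem stmt17 (a c : ℝ) (b : ℝ) (hb : b ≠ 0) :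
    ∀ f : ℝ → ℝ, Continuous f → (∀ t : ℝ, f (t + 2 * π) = f t) →
      Tendsto
        (fun n : ℕ =>
          (1 / (n : ℝ)) * ∑ k ∈ Finset.Icc 1 n, f (a * k + b * Real.sqrt k + c))
        atTop
        (nhds ((1 / (2 * π)) * ∫ t in (0 : ℝ)..(2 * π), f t)) := by
  intro f hf hper
  have : Fact (0 < 2 * π) := ⟨two_pi_pos⟩
  have hp : Function.Periodic f (2 * π) := hper
  let g : C(AddCircle (2 * π), ℂ) :=
    ⟨fun t => (hp.lift t : ℂ), Complex.continuous_ofReal.comp (continuous_coinduced_dom.mpr hf)⟩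
  have hgc : ∀ t : ℝ, g (t : AddCircle (2 * π)) = (f t : ℂ) := fun t => rfl
  let r : ℕ → ℝ := fun k => a * ((k : ℝ) + 1) + b * sqrtSucc k + c
  have key := weyl_criterion (fun k => (r k : AddCircle (2 * π))) (fun m hm => ?_) g
  · rw [fourierCoeff_eq_intervalIntegral _ _ 0] at key
    simp only [neg_zero, fourier_zero, one_smul, hgc, zero_add] at key
    rw [intervalIntegral.integral_ofReal] at key
    have key2 := (Complex.continuous_re.tendsto _).comp key
    simp only [Function.comp_def, Complex.real_smul, ← Complex.ofReal_sum, ← Complex.ofReal_mul,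
      Complex.ofReal_re] at key2
    refine key2.congr fun n => ?_
    rw [one_div, Finset.range_eq_Ico, Finset.sum_Ico_eq_sum_range, ← Finset.Ico_add_one_right_eq_Icc,
      Finset.sum_Ico_eq_sum_range]
    simp [r, sqrtSucc, add_comm]
  · have hm' : (m : ℝ) ≠ 0 := by exact_mod_cast hm
    have h := (weyl_sum (m * a) (m * b) (mul_ne_zero hm' hb)).mul_const
      (Complex.exp (Complex.I * (m * c : ℝ)))
    rw [zero_mul] at h
    refine h.congr fun n => ?_
    rw [smul_mul_assoc, Finset.sum_mul]
    congr 1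
    refine Finset.sum_congr rfl fun k _ => ?_
    rw [fourier_coe_apply, ← Complex.exp_add]
    congr 1
    have hpi : (π : ℂ) ≠ 0 := by exact_mod_cast pi_ne_zero
    simp only [r]
    push_cast
    field_simp
end

section
/- Let p ∈ (0,1) and C, d ∈ ℝ. For β > 0 set n_β := β/|log p|. Then, as β → ∞ along the reals, (|log p|^{1+β}/Γ(1+β)) · ∑_{n=1}^∞ p^n · n^β · exp(C·(n−n_β)/√β) · cos(d·(n−n_β)/√β) converges to exp((C²−d²)/(2·(log p)²)) · cos(C·d/(log p)²). (In particular, taking C = d = 0, ∑_{n=1}^∞ p^n n^β is asymptotically equivalent to Γ(1+β)/|log p|^{1+β} as β → ∞.) -/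
/-! Put `L = |log p|`, `w = C + d i` and `s = L - w / √β`. Since `exp (C y) * cos (d y)` is the real part
of `exp (w y)`, the series is the real part of `exp (-w √β / L) * ∑ F (n)` with
`F x = x ^ β * exp (-s x)`.

The integral of `F` over the half line is `Γ(1 + β) / s ^ (1 + β)`
(`integral_rpow_mul_cexp_neg`), and after normalization it converges to `exp (w ^ 2 / (2 L ^ 2))` by
a second-order expansion of the logarithm (`tendsto_normalized_integral`). The difference between
the sum and the integral is at most the `L¹` norm of `F'` (`norm_tsum_sub_integral_le`), which is
`O(1 / √β)` times `Γ(1 + β) / s.re ^ (1 + β)` (`integral_norm_deriv_le`). That last quantity, after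
normalization, stays bounded: it converges, being the normalized integral with `w` replaced by `C`.
Taking real parts of `exp (w ^ 2 / (2 L ^ 2))` gives the claim.
-/

open Filter Real
open MeasureTheory Set Topology

/-! ### The Gamma integral with a complex rate -/

lemma integrableOn_rpow_mul_exp_neg {a r : ℝ} (ha : 0 < a) (hr : 0 < r) :
    IntegrableOn (fun t : ℝ => t ^ (a - 1) * Real.exp (-(r * t))) (Ioi 0) := by
  have := integrableOn_rpow_mul_exp_neg_mul_rpow (p := 1) (s := a - 1) (b := r)
    (by linarith) one_pos hr
  simpa using this

/-- The Gamma integral with a complex rate, by analytic continuation: both sides are holomorphic in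
`s` on `0 < s.re`, and they agree for real `s`. -/
lemma integral_rpow_mul_cexp_neg {a : ℝ} (ha : 0 < a) {s : ℂ} (hs : 0 < s.re) :
    ∫ t in Ioi (0 : ℝ), ((t ^ (a - 1) : ℝ) : ℂ) * Complex.exp (-(s * t)) =
      (1 / s) ^ (a : ℂ) * (Real.Gamma a : ℂ) := by
  -- For the density `t ^ (a - 1)`, the left side is `complexMGF` at `-s`, hence holomorphic.
  set μ : Measure ℝ :=
    (volume.restrict (Ioi (0 : ℝ))).withDensity (fun t => ENNReal.ofReal (t ^ (a - 1))) with hμ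
  have hmeas : Measurable (fun t : ℝ => ENNReal.ofReal (t ^ (a - 1))) := by fun_prop
  have hfin : ∀ᵐ t ∂(volume.restrict (Ioi (0 : ℝ))), ENNReal.ofReal (t ^ (a - 1)) < ⊤ :=
    ae_of_all _ fun t => ENNReal.ofReal_lt_top
  have key : ∀ z : ℂ, ProbabilityTheory.complexMGF id μ z =
      ∫ t in Ioi (0 : ℝ), ((t ^ (a - 1) : ℝ) : ℂ) * Complex.exp (z * t) := by
    intro z
    rw [ProbabilityTheory.complexMGF, hμ,
      integral_withDensity_eq_integral_toReal_smul hmeas hfin]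
    refine setIntegral_congr_fun measurableSet_Ioi fun t ht => ?_
    have ht' : 0 ≤ t ^ (a - 1) := Real.rpow_nonneg (le_of_lt ht) _
    simp [ENNReal.toReal_ofReal ht']
  have hsub : Iio (0 : ℝ) ⊆ ProbabilityTheory.integrableExpSet id μ := by
    intro r hr
    change Integrable (fun ω : ℝ => Real.exp (r * id ω)) μ
    rw [hμ, integrable_withDensity_iff_integrable_smul' hmeas hfin]
    refine (integrableOn_rpow_mul_exp_neg ha (neg_pos.mpr hr)).congr_fun (fun t ht => ?_)
      measurableSet_Ioi
    have ht' : 0 ≤ t ^ (a - 1) := Real.rpow_nonneg (le_of_lt ht) _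
    simp [ENNReal.toReal_ofReal ht']
  have hopen : IsOpen {z : ℂ | z.re < 0} := isOpen_lt Complex.continuous_re continuous_const
  have hX : AnalyticOnNhd ℂ (ProbabilityTheory.complexMGF id μ) {z : ℂ | z.re < 0} :=
    ProbabilityTheory.analyticOnNhd_complexMGF.mono fun z hz =>
      interior_maximal hsub isOpen_Iio hz
  have hY : AnalyticOnNhd ℂ (fun z : ℂ => (1 / (-z)) ^ (a : ℂ) * (Real.Gamma a : ℂ))
      {z : ℂ | z.re < 0} := by
    refine DifferentiableOn.analyticOnNhd (fun z hz => ?_) hopen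
    have hz0 : -z ≠ 0 := by
      intro h
      have : z = 0 := by simpa using h
      simp [this] at hz
    have h1 : 0 < (1 / -z).re := by
      rw [one_div, Complex.inv_re]
      refine div_pos ?_ (Complex.normSq_pos.mpr hz0)
      simpa using hz
    refine DifferentiableAt.differentiableWithinAt ?_
    refine DifferentiableAt.mul_const ?_ _
    refine DifferentiableAt.cpow_const ?_ (Or.inl h1)
    exact (differentiableAt_const _).div differentiableAt_id.neg hz0
  have hEq := AnalyticOnNhd.eqOn_of_preconnected_of_frequently_eq hX hY
    (convex_halfSpace_re_lt 0).isPreconnected (z₀ := ((-1 : ℝ) : ℂ)) (by simp) (by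
      have h_real : ∃ᶠ (x : ℝ) in 𝓝[≠] (-1 : ℝ), ProbabilityTheory.complexMGF id μ x =
          (1 / (-(x : ℂ))) ^ (a : ℂ) * (Real.Gamma a : ℂ) := by
        refine Eventually.frequently ?_
        refine eventually_nhdsWithin_of_eventually_nhds ?_
        filter_upwards [Iio_mem_nhds (show (-1 : ℝ) < 0 by norm_num)] with x hx
        have hx' : 0 < -x := neg_pos.mpr hx
        have := Complex.integral_cpow_mul_exp_neg_mul_Ioi (a := a) (r := -x) (by simpa using ha) hx'
        rw [key, ← Complex.Gamma_ofReal, ← Complex.ofReal_neg, ← this]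
        refine setIntegral_congr_fun measurableSet_Ioi fun t ht => ?_
        have ht' : (0:ℝ) ≤ t := le_of_lt ht
        simp [Complex.ofReal_cpow ht']
      have ht : Tendsto (fun x : ℝ => (x : ℂ)) (𝓝[≠] (-1 : ℝ)) (𝓝[≠] ((-1 : ℝ) : ℂ)) := by
        refine tendsto_nhdsWithin_of_tendsto_nhds_of_eventually_within _
          (Complex.continuous_ofReal.continuousAt.tendsto.mono_left nhdsWithin_le_nhds) ?_
        filter_upwards [self_mem_nhdsWithin] with x hx
        simpa using fun h => hx (by exact_mod_cast h)
      exact ht.frequently h_real)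
  have h := hEq (x := -s) (by simpa using hs)
  rw [key] at h
  simpa using h

/-! ### Comparing a sum with an integral -/

/-- Sum versus integral: integrating by parts against `x - n` on `(n, n + 1]` expresses
`f (n + 1)` as the integral of `f + (x - n) f'` there, so the error is at most the `L¹` norm of the
derivative. -/
lemma norm_tsum_sub_integral_le {f f' : ℝ → ℂ} (hf : ∀ x : ℝ, HasDerivAt f (f' x) x)
    (hfi : IntegrableOn f (Ioi 0)) (hfi' : IntegrableOn f' (Ioi 0)) :
    Summable (fun n : ℕ => f (n + 1)) ∧
      ‖∑' n : ℕ, f (n + 1) - ∫ x in Ioi (0 : ℝ), f x‖ ≤ ∫ x in Ioi (0 : ℝ), ‖f' x‖ := by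
  have hU : (⋃ n : ℕ, Ioc (n : ℝ) ((n : ℝ) + 1)) = Ioi 0 := by
    have := iUnion_Ioc_map_succ_eq_Ioi (f := fun n : ℕ => (n : ℝ)) (by simp)
      (not_bddAbove_iff.mpr fun x => by
        obtain ⟨n, hn⟩ := exists_nat_gt x
        exact ⟨n, ⟨n, rfl⟩, hn⟩)
    simpa using this
  have hD : Pairwise (Function.onFun Disjoint fun n : ℕ => Ioc (n : ℝ) ((n : ℝ) + 1)) := by
    have := Monotone.pairwise_disjoint_on_Ioc_succ (f := fun n : ℕ => (n : ℝ)) Nat.mono_cast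
    simpa using this
  have h1 : HasSum (fun n : ℕ => ∫ x in Ioc (n : ℝ) ((n : ℝ) + 1), f x)
      (∫ x in Ioi (0 : ℝ), f x) := by
    rw [← hU]
    exact hasSum_integral_iUnion (fun n => measurableSet_Ioc) hD (by rwa [hU])
  have h2 : HasSum (fun n : ℕ => ∫ x in Ioc (n : ℝ) ((n : ℝ) + 1), ‖f' x‖)
      (∫ x in Ioi (0 : ℝ), ‖f' x‖) := by
    rw [← hU]
    exact hasSum_integral_iUnion (fun n => measurableSet_Ioc) hD (by rw [hU]; exact hfi'.norm)
  have hfc : Continuous f := continuous_iff_continuousAt.mpr fun x => (hf x).continuousAt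
  have hb : ∀ n : ℕ, ‖f (n + 1) - ∫ x in Ioc (n : ℝ) ((n : ℝ) + 1), f x‖ ≤
      ∫ x in Ioc (n : ℝ) ((n : ℝ) + 1), ‖f' x‖ := by
    intro n
    have hsub : Ioc (n : ℝ) ((n : ℝ) + 1) ⊆ Ioi 0 := fun x hx => lt_of_le_of_lt n.cast_nonneg hx.1
    have hI' : IntegrableOn f' (Ioc (n : ℝ) ((n : ℝ) + 1)) := hfi'.mono_set hsub
    have hle : (n : ℝ) ≤ (n : ℝ) + 1 := by linarith
    have hII' : IntervalIntegrable f' volume (n : ℝ) ((n : ℝ) + 1) :=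
      (intervalIntegrable_iff_integrableOn_Ioc_of_le hle).mpr hI'
    have hII : IntervalIntegrable f volume (n : ℝ) ((n : ℝ) + 1) := hfc.intervalIntegrable _ _
    have hprod : IntervalIntegrable (fun x : ℝ => ((x - n : ℝ) : ℂ) * f' x) volume
        (n : ℝ) ((n : ℝ) + 1) :=
      hII'.continuousOn_mul (by fun_prop)
    -- Integration by parts against `x - n`, which vanishes at the left end point only.
    have hparts := intervalIntegral.integral_eq_sub_of_hasDerivAt
      (a := (n : ℝ)) (b := (n : ℝ) + 1)
      (f := fun x : ℝ => ((x - n : ℝ) : ℂ) * f x)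
      (f' := fun x : ℝ => f x + ((x - n : ℝ) : ℂ) * f' x)
      (fun x _ => by
        have := (((hasDerivAt_id x).sub_const (n : ℝ)).ofReal_comp).mul (hf x)
        convert! this using 1
        simp) (hII.add hprod)
    rw [intervalIntegral.integral_add hII hprod] at hparts
    have : f (n + 1) - ∫ x in Ioc (n : ℝ) ((n : ℝ) + 1), f x =
        ∫ x in Ioc (n : ℝ) ((n : ℝ) + 1), ((x - n : ℝ) : ℂ) * f' x := by
      rw [← intervalIntegral.integral_of_le hle, ← intervalIntegral.integral_of_le hle,
        sub_eq_iff_eq_add', hparts]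
      simp
    rw [this]
    refine norm_integral_le_of_norm_le hI'.norm ?_
    refine (ae_restrict_iff' measurableSet_Ioc).mpr (ae_of_all _ fun x hx => ?_)
    rw [norm_mul, Complex.norm_real, Real.norm_eq_abs, abs_of_nonneg (by linarith [hx.1])]
    exact mul_le_of_le_one_left (norm_nonneg _) (by linarith [hx.2])
  have hs : Summable (fun n : ℕ => f (n + 1)) := by
    have := (Summable.of_norm_bounded h2.summable hb).add h1.summable
    simpa using this
  refine ⟨hs, ?_⟩
  rw [← h1.tsum_eq, ← hs.tsum_sub h1.summable]
  exact tsum_of_norm_bounded h2 hb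

/-! ### Asymptotics of the normalized integral -/

/-- The limit of the normalized Gamma integral. With `v = -w / (L √β)`, the logarithm of the left
side is `β v - (1 + β) log (1 + v)`; the linear terms of size `√β` cancel and `β v ^ 2 / 2` is
constant in `β`. -/
lemma tendsto_normalized_integral {L : ℝ} (hL : 0 < L) (w : ℂ) :
    Tendsto (fun β : ℝ => ((L ^ (1 + β) : ℝ) : ℂ) *
        ((1 / ((L : ℂ) - w / (Real.sqrt β : ℂ))) ^ ((1 + β : ℝ) : ℂ) *
          Complex.exp (-(w * (Real.sqrt β : ℂ) / L))))
      atTop (𝓝 (Complex.exp (w ^ 2 / (2 * (L : ℂ) ^ 2)))) := by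
  have hLc : (L : ℂ) ≠ 0 := by exact_mod_cast hL.ne'
  -- The remainder of the second-order Taylor expansion of `log (1 + v)`.
  set R : ℂ → ℂ := fun v => Complex.log (1 + v) - (v - v ^ 2 / 2) with hR
  set v : ℝ → ℂ := fun β => -(w / L) * ((Real.sqrt β)⁻¹ : ℝ) with hv
  have hinv : Tendsto (fun β : ℝ => (Real.sqrt β)⁻¹) atTop (𝓝 0) :=
    tendsto_inv_atTop_zero.comp Real.tendsto_sqrt_atTop
  have hv0 : Tendsto v atTop (𝓝 0) := by
    have := (Complex.continuous_ofReal.tendsto 0).comp hinv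
    simpa [hv] using this.const_mul (-(w / L))
  have hvn : Tendsto (fun β => ‖v β‖) atTop (𝓝 0) := by simpa using hv0.norm
  have hsmall : ∀ᶠ β in atTop, ‖v β‖ < 1 / 2 := hvn.eventually_lt_const (by norm_num)
  have hRb : ∀ z : ℂ, ‖z‖ < 1 / 2 → ‖R z‖ ≤ ‖z‖ ^ 3 := by
    intro z hz
    have h := Complex.norm_log_sub_logTaylor_le 2 (z := z) (by linarith)
    have h2 : Complex.logTaylor (2 + 1) z = z - z ^ 2 / 2 := by
      simp [Complex.logTaylor_succ, Complex.logTaylor_zero]; ring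
    rw [h2] at h
    refine h.trans ?_
    have h3 : (1 - ‖z‖)⁻¹ ≤ 2 := by
      rw [inv_le_comm₀ (by linarith) (by norm_num)]; linarith
    have : 0 ≤ ‖z‖ ^ 3 := by positivity
    norm_num
    nlinarith
  have hβv : ∀ β : ℝ, 0 < β → (β : ℂ) * v β ^ 2 = w ^ 2 / (L : ℂ) ^ 2 := by
    intro β hβ
    have : ((Real.sqrt β : ℝ) : ℂ) ^ 2 = β := by exact_mod_cast Real.sq_sqrt hβ.le
    have h0 : ((Real.sqrt β : ℝ) : ℂ) ≠ 0 := by exact_mod_cast (Real.sqrt_pos.mpr hβ).ne'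
    rw [← this]
    simp only [hv]
    push_cast
    field_simp
  have hrem : Tendsto (fun β : ℝ => ((1 + β : ℝ) : ℂ) * R (v β)) atTop (𝓝 0) := by
    rw [tendsto_zero_iff_norm_tendsto_zero]
    have hlim : Tendsto (fun β => 2 * ‖w ^ 2 / (L : ℂ) ^ 2‖ * ‖v β‖) atTop (𝓝 0) := by
      have := hvn.const_mul (2 * ‖w ^ 2 / (L : ℂ) ^ 2‖)
      rwa [mul_zero] at this
    refine squeeze_zero' (Eventually.of_forall fun _ => norm_nonneg _) ?_ hlim
    filter_upwards [hsmall, eventually_ge_atTop 1] with β hβ hβ1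
    rw [norm_mul, Complex.norm_real, Real.norm_eq_abs, abs_of_nonneg (by linarith)]
    have h1 := hβv β (by linarith)
    have h2 : β * ‖v β‖ ^ 2 = ‖w ^ 2 / (L : ℂ) ^ 2‖ := by
      rw [← h1, norm_mul (β : ℂ), norm_pow (v β), Complex.norm_real, Real.norm_eq_abs,
        abs_of_nonneg (by linarith)]
    rw [← h2]
    calc (1 + β) * ‖R (v β)‖ ≤ (2 * β) * ‖v β‖ ^ 3 := by
          gcongr
          · linarith
          · exact hRb _ hβ
      _ = _ := by ring
  have hexp : Tendsto (fun β : ℝ => -v β + v β ^ 2 / 2 + w ^ 2 / (2 * (L : ℂ) ^ 2)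
      - ((1 + β : ℝ) : ℂ) * R (v β)) atTop (𝓝 (w ^ 2 / (2 * (L : ℂ) ^ 2))) := by
    have := ((hv0.neg.add ((hv0.pow 2).div_const 2)).add_const (w ^ 2 / (2 * (L : ℂ) ^ 2))).sub hrem
    simpa using this
  refine ((Complex.continuous_exp.tendsto _).comp hexp).congr' ?_
  filter_upwards [hsmall, eventually_ge_atTop 1] with β hβ hβ1
  have hs0 : ((Real.sqrt β : ℝ) : ℂ) ≠ 0 := by
    exact_mod_cast (Real.sqrt_pos.mpr (by linarith)).ne'
  have hmem := Complex.mem_slitPlane_of_norm_lt_one (z := v β) (by linarith)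
  have h10 : 1 + v β ≠ 0 := Complex.slitPlane_ne_zero hmem
  have e1 : 1 / ((L : ℂ) - w / (Real.sqrt β : ℂ)) = ((L⁻¹ : ℝ) : ℂ) * (1 + v β)⁻¹ := by
    have : (L : ℂ) - w / (Real.sqrt β : ℂ) = L * (1 + v β) := by
      simp only [hv]; push_cast; field_simp; ring
    rw [this]; push_cast; rw [one_div, mul_inv]
  have e2 : Complex.log (1 / ((L : ℂ) - w / (Real.sqrt β : ℂ))) =
      ((-Real.log L : ℝ) : ℂ) - Complex.log (1 + v β) := by
    rw [e1, Complex.log_ofReal_mul (inv_pos.mpr hL) (inv_ne_zero h10),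
      Complex.log_inv _ (Complex.slitPlane_arg_ne_pi hmem), Real.log_inv]
    ring
  have e3 : 1 / ((L : ℂ) - w / (Real.sqrt β : ℂ)) ≠ 0 := by
    rw [e1]
    exact mul_ne_zero (by exact_mod_cast (inv_pos.mpr hL).ne') (inv_ne_zero h10)
  have e4 : Complex.log (1 + v β) = R (v β) + (v β - v β ^ 2 / 2) := by simp [hR]
  rw [Complex.cpow_def_of_ne_zero e3, e2, Real.rpow_def_of_pos hL, Complex.ofReal_exp,
    ← Complex.exp_add, ← Complex.exp_add]
  simp only [Function.comp]
  congr 1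
  rw [e4]
  have e5 : (w * (Real.sqrt β : ℂ) / L) = -(β * v β) := by
    have : ((Real.sqrt β : ℝ) : ℂ) ^ 2 = β := by exact_mod_cast Real.sq_sqrt (by linarith)
    rw [← this]
    simp only [hv]
    push_cast
    field_simp
  rw [e5]
  have e6 : w ^ 2 / (2 * (L : ℂ) ^ 2) = β * v β ^ 2 / 2 := by
    rw [hβv β (by linarith)]; field_simp
  rw [e6]
  push_cast
  ring
/-! ### The size of the derivative -/

lemma norm_cexp_neg_mul_ofReal (s : ℂ) (x : ℝ) :
    ‖Complex.exp (-(s * x))‖ = Real.exp (-(s.re * x)) := by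
  rw [Complex.norm_exp]; simp

/-- Bound for the `L¹` norm of the derivative of `x ^ β * exp (-(s * x))`. Writing the derivative as
`(β / x - s)` times the function, `|β / x - s.re|` is dominated by its square with weight `√β / 2`
plus `1 / (2 * √β)`, and the integral of the square against the Gamma weight is explicit. The
resulting relative error is `O(1 / √β)` when `s.im = O(1 / √β)` and `s.re` is bounded. -/
lemma integral_norm_deriv_le {β : ℝ} (hβ : 2 ≤ β) {s : ℂ} (hs : 0 < s.re) :
    IntegrableOn (fun x : ℝ => (((β * x ^ (β - 1) : ℝ) : ℂ) - s * ((x ^ β : ℝ) : ℂ)) *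
        Complex.exp (-(s * x))) (Ioi 0) ∧
    ∫ x in Ioi (0 : ℝ), ‖(((β * x ^ (β - 1) : ℝ) : ℂ) - s * ((x ^ β : ℝ) : ℂ)) *
        Complex.exp (-(s * x))‖ ≤
      (1 / s.re) ^ (1 + β) * Real.Gamma (1 + β) *
        (Real.sqrt β / 2 * (s.re ^ 2 / (β - 1)) + (1 / (2 * Real.sqrt β) + |s.im|)) := by
  set σ := s.re with hσ
  set ε := Real.sqrt β with hε
  have hε0 : 0 < ε := Real.sqrt_pos.mpr (by linarith)
  have i1 := integrableOn_rpow_mul_exp_neg (a := β - 1) (by linarith) hs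
  have i2 := integrableOn_rpow_mul_exp_neg (a := β) (by linarith) hs
  have i3 := integrableOn_rpow_mul_exp_neg (a := 1 + β) (by linarith) hs
  have j1 := Real.integral_rpow_mul_exp_neg_mul_Ioi (a := β - 1) (by linarith) hs
  have j2 := Real.integral_rpow_mul_exp_neg_mul_Ioi (a := β) (by linarith) hs
  have j3 := Real.integral_rpow_mul_exp_neg_mul_Ioi (a := 1 + β) (by linarith) hs
  set c1 := ε / 2 * β ^ 2 with hc1
  set c2 := ε / 2 * (2 * β * σ) with hc2
  set c3 := ε / 2 * σ ^ 2 + (1 / (2 * ε) + |s.im|) with hc3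
  set g : ℝ → ℝ := fun x => c1 * (x ^ (β - 1 - 1) * Real.exp (-(σ * x)))
    - c2 * (x ^ (β - 1) * Real.exp (-(σ * x)))
    + c3 * (x ^ (1 + β - 1) * Real.exp (-(σ * x))) with hg
  have hgi : IntegrableOn g (Ioi 0) := ((i1.const_mul c1).sub (i2.const_mul c2)).add
    (i3.const_mul c3)
  have hle : ∀ x ∈ Ioi (0 : ℝ), ‖(((β * x ^ (β - 1) : ℝ) : ℂ) - s * ((x ^ β : ℝ) : ℂ)) *
        Complex.exp (-(s * x))‖ ≤ g x := by
    intro x hx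
    have hx0 : (0 : ℝ) < x := hx
    set y := x ^ (β - 1 - 1) with hy
    have hy0 : 0 ≤ y := (Real.rpow_pos_of_pos hx0 _).le
    have p1 : x ^ (β - 1) = y * x := by
      rw [hy, Real.rpow_sub_one hx0.ne' (β - 1)]; field_simp
    have p2 : x ^ β = y * x ^ 2 := by
      have := Real.rpow_sub_one hx0.ne' β
      rw [p1] at this
      field_simp at this
      rw [← this]
    have p3 : x ^ (1 + β - 1) = y * x ^ 2 := by rw [← p2]; congr 1; ring
    rw [norm_mul, norm_cexp_neg_mul_ofReal, hg]
    simp only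
    rw [p1, p2, p3]
    have e0 := Real.exp_pos (-(σ * x))
    have hz : ((β * (y * x) : ℝ) : ℂ) - s * ((y * x ^ 2 : ℝ) : ℂ) =
        ((y * x * (β - σ * x) : ℝ) : ℂ) - ((y * x ^ 2 * s.im : ℝ) : ℂ) * Complex.I := by
      conv_lhs => rw [← Complex.re_add_im s]
      rw [← hσ]
      push_cast
      ring
    have hn : ‖((β * (y * x) : ℝ) : ℂ) - s * ((y * x ^ 2 : ℝ) : ℂ)‖ ≤
        y * x * |β - σ * x| + y * x ^ 2 * |s.im| := by
      rw [hz]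
      refine (norm_sub_le _ _).trans (le_of_eq ?_)
      rw [norm_mul, Complex.norm_I, mul_one, Complex.norm_real, Complex.norm_real,
        Real.norm_eq_abs, Real.norm_eq_abs, abs_mul (y * x), abs_mul (y * x ^ 2),
        abs_of_nonneg (by positivity : 0 ≤ y * x), abs_of_nonneg (by positivity : 0 ≤ y * x ^ 2)]
    -- The weighted inequality `2 |u| x ≤ ε u ^ 2 + x ^ 2 / ε` with `u = β - σ x`.
    have ham : x * |β - σ * x| ≤ ε / 2 * (β - σ * x) ^ 2 + 1 / (2 * ε) * x ^ 2 := by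
      rw [← sq_abs (β - σ * x)]
      have h := sq_nonneg (ε * |β - σ * x| - x)
      have h2 : ε / 2 * |β - σ * x| ^ 2 + 1 / (2 * ε) * x ^ 2 - x * |β - σ * x| =
          (ε * |β - σ * x| - x) ^ 2 / (2 * ε) := by field_simp; ring
      have h3 : 0 ≤ (ε * |β - σ * x| - x) ^ 2 / (2 * ε) := by positivity
      linarith
    calc _ ≤ (y * x * |β - σ * x| + y * x ^ 2 * |s.im|) * Real.exp (-(σ * x)) := by gcongr
      _ = (y * (x * |β - σ * x|) + y * x ^ 2 * |s.im|) * Real.exp (-(σ * x)) := by ring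
      _ ≤ (y * (ε / 2 * (β - σ * x) ^ 2 + 1 / (2 * ε) * x ^ 2) + y * x ^ 2 * |s.im|) *
          Real.exp (-(σ * x)) := by gcongr
      _ = _ := by rw [hc1, hc2, hc3]; ring
  have hle' : ∀ᵐ x ∂(volume.restrict (Ioi (0 : ℝ))),
      ‖(((β * x ^ (β - 1) : ℝ) : ℂ) - s * ((x ^ β : ℝ) : ℂ)) * Complex.exp (-(s * x))‖ ≤ g x :=
    (ae_restrict_iff' measurableSet_Ioi).mpr (ae_of_all _ hle)
  have hFint : IntegrableOn (fun x : ℝ => (((β * x ^ (β - 1) : ℝ) : ℂ) - s * ((x ^ β : ℝ) : ℂ)) *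
        Complex.exp (-(s * x))) (Ioi 0) := by
    refine Integrable.mono' hgi ?_ hle'
    exact Measurable.aestronglyMeasurable (by fun_prop)
  refine ⟨hFint, ?_⟩
  refine (integral_mono_ae hFint.norm hgi hle').trans (le_of_eq ?_)
  have k1 : ∫ x in Ioi (0 : ℝ), g x = c1 * ((1 / σ) ^ (β - 1) * Real.Gamma (β - 1)) -
      c2 * ((1 / σ) ^ β * Real.Gamma β) + c3 * ((1 / σ) ^ (1 + β) * Real.Gamma (1 + β)) := by
    have m1 := integral_sub (i1.const_mul c1) (i2.const_mul c2)
    have m2 := integral_add ((i1.const_mul c1).sub (i2.const_mul c2)) (i3.const_mul c3)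
    rw [← j1, ← j2, ← j3, ← integral_const_mul, ← integral_const_mul, ← integral_const_mul, ← m1]
    exact m2
  rw [k1]
  have hσi : 0 < 1 / σ := by positivity
  have g2 : Real.Gamma β = (β - 1) * Real.Gamma (β - 1) := by
    have := Real.Gamma_add_one (s := β - 1) (by linarith)
    rwa [sub_add_cancel] at this
  have g3 : Real.Gamma (1 + β) = β * Real.Gamma β := by
    rw [add_comm]; exact Real.Gamma_add_one (by linarith)
  have q2 : (1 / σ) ^ β = (1 / σ) ^ (β - 1) / σ := by
    rw [Real.rpow_sub_one hσi.ne']; field_simp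
  have q3 : (1 / σ) ^ (1 + β) = (1 / σ) ^ (β - 1) / σ ^ 2 := by
    rw [Real.rpow_add hσi, q2, Real.rpow_one]; field_simp
  have hb1 : β - 1 ≠ 0 := by linarith
  rw [g3, g2, q3, q2, hc1, hc2, hc3]
  field_simp
  ring
/-! ### The limit of the series -/

theorem stmt19 (p : ℝ) (hp : p ∈ Set.Ioo (0 : ℝ) 1) (C d : ℝ) :
    Tendsto
      (fun β : ℝ =>
        (|Real.log p| ^ (1 + β) / Real.Gamma (1 + β)) *
          ∑' n : ℕ, p ^ (n + 1) * ((n : ℝ) + 1) ^ β *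
            Real.exp (C * (((n : ℝ) + 1) - β / |Real.log p|) / Real.sqrt β) *
            Real.cos (d * (((n : ℝ) + 1) - β / |Real.log p|) / Real.sqrt β))
      atTop
      (nhds (Real.exp ((C ^ 2 - d ^ 2) / (2 * Real.log p ^ 2)) *
        Real.cos (C * d / Real.log p ^ 2))) := by
  have hlog : Real.log p < 0 := Real.log_neg hp.1 hp.2
  rw [← sq_abs (Real.log p)]
  have hpL : p = Real.exp (-|Real.log p|) := by
    rw [abs_of_neg hlog, neg_neg, Real.exp_log hp.1]
  have hL : 0 < |Real.log p| := abs_pos.mpr hlog.ne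
  generalize |Real.log p| = L at hpL hL ⊢
  subst hpL
  -- `exp (C y) * cos (d y)` is the real part of `exp (w y)`.
  set w : ℂ := (C : ℂ) + d * Complex.I with hw
  have hwre : w.re = C := by simp [hw]
  have hwim : w.im = d := by simp [hw]
  set s : ℝ → ℂ := fun β => (L : ℂ) - w / (Real.sqrt β : ℂ) with hs
  have hsre : ∀ β, (s β).re = L - C / Real.sqrt β := fun β => by
    simp only [hs]; rw [Complex.sub_re, Complex.div_ofReal_re, hwre, Complex.ofReal_re]
  have hsim : ∀ β, (s β).im = -(d / Real.sqrt β) := fun β => by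
    simp only [hs]; rw [Complex.sub_im, Complex.div_ofReal_im, hwim, Complex.ofReal_im, zero_sub]
  set E : ℝ → ℂ := fun β => Complex.exp (-(w * (Real.sqrt β : ℂ) / L)) with hE
  set F : ℝ → ℝ → ℂ := fun β x => ((x ^ β : ℝ) : ℂ) * Complex.exp (-(s β * x)) with hF
  set K : ℝ → ℝ := fun β => L ^ (1 + β) / Real.Gamma (1 + β) with hK
  have hinv : Tendsto (fun β : ℝ => (Real.sqrt β)⁻¹) atTop (𝓝 0) :=
    tendsto_inv_atTop_zero.comp Real.tendsto_sqrt_atTop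
  have hre : Tendsto (fun β => (s β).re) atTop (𝓝 L) := by
    have := (hinv.const_mul C).const_sub L
    simpa [hsre, div_eq_mul_inv] using this
  have him : Tendsto (fun β => (s β).im) atTop (𝓝 0) := by
    have := (hinv.const_mul d).neg
    simpa [hsim, div_eq_mul_inv] using this
  have hpos : ∀ᶠ β in atTop, 0 < (s β).re := hre.eventually_const_lt hL
  have hpkg : ∀ β, 2 ≤ β → 0 < (s β).re →
      Summable (fun n : ℕ => F β (n + 1)) ∧
      ∫ x in Ioi (0 : ℝ), F β x =
        (1 / s β) ^ ((1 + β : ℝ) : ℂ) * (Real.Gamma (1 + β) : ℂ) ∧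
      ‖∑' n : ℕ, F β (n + 1) - ∫ x in Ioi (0 : ℝ), F β x‖ ≤
        (1 / (s β).re) ^ (1 + β) * Real.Gamma (1 + β) *
        (Real.sqrt β / 2 * ((s β).re ^ 2 / (β - 1)) + (1 / (2 * Real.sqrt β) + |(s β).im|)) := by
    intro β hβ hσ
    have hder : ∀ x : ℝ, HasDerivAt (F β) ((((β * x ^ (β - 1) : ℝ) : ℂ) -
        s β * ((x ^ β : ℝ) : ℂ)) * Complex.exp (-(s β * x))) x := by
      intro x
      have h1 := (Real.hasDerivAt_rpow_const (x := x) (p := β)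
        (Or.inr (by linarith))).ofReal_comp
      have h2 := (((hasDerivAt_id x).ofReal_comp.const_mul (s β)).neg).cexp
      have h3 := h1.mul h2
      convert! h3 using 1
      simp
      ring
    have hFi : IntegrableOn (F β) (Ioi 0) := by
      refine Integrable.mono' (integrableOn_rpow_mul_exp_neg (a := 1 + β) (by linarith) hσ)
        (Measurable.aestronglyMeasurable (by simp only [hF]; fun_prop)) ?_
      refine (ae_restrict_iff' measurableSet_Ioi).mpr (ae_of_all _ fun x hx => le_of_eq ?_)
      have hx0 : 0 ≤ x ^ β := Real.rpow_nonneg (le_of_lt hx) _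
      simp only [hF]
      rw [norm_mul, norm_cexp_neg_mul_ofReal, Complex.norm_real, Real.norm_eq_abs,
        abs_of_nonneg hx0, add_sub_cancel_left]
    obtain ⟨hi', hb⟩ := integral_norm_deriv_le hβ hσ
    obtain ⟨hsum, hdiff⟩ := norm_tsum_sub_integral_le hder hFi hi'
    refine ⟨hsum, ?_, hdiff.trans hb⟩
    have := integral_rpow_mul_cexp_neg (a := 1 + β) (by linarith) hσ
    rw [add_sub_cancel_left] at this
    exact this
  have hGpos : ∀ β : ℝ, 2 ≤ β → 0 < Real.Gamma (1 + β) := fun β hβ =>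
    Real.Gamma_pos_of_pos (by linarith)
  have hmain : Tendsto (fun β => (K β : ℂ) * E β * ∫ x in Ioi (0 : ℝ), F β x) atTop
      (𝓝 (Complex.exp (w ^ 2 / (2 * (L : ℂ) ^ 2)))) := by
    refine (tendsto_normalized_integral hL w).congr' ?_
    filter_upwards [hpos, eventually_ge_atTop 2] with β hσ hβ
    rw [(hpkg β hβ hσ).2.1]
    have : (Real.Gamma (1 + β) : ℂ) ≠ 0 := by exact_mod_cast (hGpos β hβ).ne'
    simp only [hK, hE]
    rw [Complex.ofReal_div]
    field_simp
    rfl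
  have herr : Tendsto (fun β => (K β : ℂ) * E β *
      (∑' n : ℕ, F β (n + 1) - ∫ x in Ioi (0 : ℝ), F β x)) atTop (𝓝 0) := by
    rw [tendsto_zero_iff_norm_tendsto_zero]
    -- The absolute sizes are governed by the same limit with `w` replaced by its real part.
    have h1 := (tendsto_normalized_integral hL (C : ℂ)).norm
    have h2 : Tendsto (fun β : ℝ => Real.sqrt β / 2 * ((s β).re ^ 2 / (β - 1)) +
        (1 / (2 * Real.sqrt β) + |(s β).im|)) atTop (𝓝 0) := by
      have hq : Tendsto (fun β : ℝ => (1 - β⁻¹)⁻¹) atTop (𝓝 1) := by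
        have := ((tendsto_inv_atTop_zero (𝕜 := ℝ)).const_sub 1).inv₀ (by norm_num)
        simpa using this
      have h3 : Tendsto (fun β : ℝ => (Real.sqrt β)⁻¹ / 2 * (s β).re ^ 2 * (1 - β⁻¹)⁻¹ +
          ((Real.sqrt β)⁻¹ / 2 + |(s β).im|)) atTop (𝓝 0) := by
        have := (((hinv.div_const 2).mul (hre.pow 2)).mul hq).add
          ((hinv.div_const 2).add him.abs)
        simpa using this
      refine h3.congr' ?_
      filter_upwards [eventually_ge_atTop 2] with β hβ
      have hr : 0 < Real.sqrt β := Real.sqrt_pos.mpr (by linarith)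
      have hsq : Real.sqrt β ^ 2 = β := Real.sq_sqrt (by linarith)
      have hb1 : β - 1 ≠ 0 := by linarith
      have hb0 : β ≠ 0 := by linarith
      congr 1
      · have : (1 - β⁻¹)⁻¹ = β / (β - 1) := by
          rw [show 1 - β⁻¹ = (β - 1) / β by field_simp, inv_div]
        rw [this]
        field_simp
        rw [hsq]
        ring
      · field_simp
    have h4 := h1.mul h2
    rw [mul_zero] at h4
    refine squeeze_zero' (Eventually.of_forall fun _ => norm_nonneg _) ?_ h4
    filter_upwards [hpos, eventually_ge_atTop 2] with β hσ hβ
    have hG := hGpos β hβ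
    have hKpos : 0 < K β := div_pos (Real.rpow_pos_of_pos hL _) hG
    have hEn : ‖E β‖ = Real.exp (-(C * Real.sqrt β / L)) := by
      simp only [hE]
      rw [Complex.norm_exp, Complex.neg_re, Complex.div_ofReal_re, Complex.re_mul_ofReal, hwre]
    have hN : ‖((L ^ (1 + β) : ℝ) : ℂ) *
        ((1 / ((L : ℂ) - (C : ℂ) / (Real.sqrt β : ℂ))) ^ ((1 + β : ℝ) : ℂ) *
          Complex.exp (-((C : ℂ) * (Real.sqrt β : ℂ) / L)))‖ =
        L ^ (1 + β) * ((1 / (s β).re) ^ (1 + β) * Real.exp (-(C * Real.sqrt β / L))) := by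
      have e1 : (1 : ℂ) / ((L : ℂ) - (C : ℂ) / (Real.sqrt β : ℂ)) =
          ((1 / (s β).re : ℝ) : ℂ) := by rw [hsre]; push_cast; rfl
      have e2 : Complex.exp (-((C : ℂ) * (Real.sqrt β : ℂ) / L)) =
          ((Real.exp (-(C * Real.sqrt β / L)) : ℝ) : ℂ) := by push_cast; rfl
      have h0 : 0 < 1 / (s β).re := by positivity
      rw [e1, e2, ← Complex.ofReal_cpow h0.le, ← Complex.ofReal_mul, ← Complex.ofReal_mul,
        Complex.norm_real, Real.norm_eq_abs, abs_of_nonneg]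
      have := Real.rpow_pos_of_pos h0 (1 + β)
      have := Real.rpow_pos_of_pos hL (1 + β)
      positivity
    rw [hN, norm_mul, norm_mul, hEn, Complex.norm_real, Real.norm_eq_abs, abs_of_pos hKpos]
    refine (mul_le_mul_of_nonneg_left (hpkg β hβ hσ).2.2 (by positivity)).trans (le_of_eq ?_)
    simp only [hK]
    field_simp
  have htot := hmain.add herr
  rw [add_zero] at htot
  have hlim := (Complex.continuous_re.tendsto _).comp htot
  have hval : (Complex.exp (w ^ 2 / (2 * (L : ℂ) ^ 2))).re =
      Real.exp ((C ^ 2 - d ^ 2) / (2 * L ^ 2)) * Real.cos (C * d / L ^ 2) := by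
    have : w ^ 2 / (2 * (L : ℂ) ^ 2) = (((C ^ 2 - d ^ 2) / (2 * L ^ 2) : ℝ) : ℂ) +
        ((C * d / L ^ 2 : ℝ) : ℂ) * Complex.I := by
      have hLc : (L : ℂ) ≠ 0 := by exact_mod_cast hL.ne'
      rw [hw]
      push_cast
      field_simp
      ring_nf
      rw [Complex.I_sq]
      ring
    rw [this, Complex.exp_re, Complex.add_re, Complex.add_im, Complex.re_ofReal_mul,
      Complex.im_ofReal_mul, Complex.ofReal_re, Complex.ofReal_im, Complex.I_re, Complex.I_im,
      mul_zero, mul_one, add_zero, zero_add]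
  rw [hval] at hlim
  refine hlim.congr' ?_
  -- Identification of the real summand with the real part of `E β * F β (n + 1)`.
  filter_upwards [hpos, eventually_ge_atTop 2] with β hσ hβ
  have hr : 0 < Real.sqrt β := Real.sqrt_pos.mpr (by linarith)
  simp only [Function.comp]
  rw [← mul_add, add_sub_cancel, mul_assoc, Complex.re_ofReal_mul]
  congr 1
  rw [← tsum_mul_left]
  rw [Complex.re_tsum ((hpkg β hβ hσ).1.mul_left _)]
  refine tsum_congr fun n => ?_
  have hcast : (((n : ℝ) + 1 : ℝ) : ℂ) = (n : ℂ) + 1 := by push_cast; rfl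
  have e1 : E β * F β ((n : ℝ) + 1) = (((((n : ℝ) + 1) ^ β : ℝ)) : ℂ) * Complex.exp (
      ((-(L * ((n : ℝ) + 1)) + C * (((n : ℝ) + 1) - β / L) / Real.sqrt β : ℝ) : ℂ) +
      ((d * (((n : ℝ) + 1) - β / L) / Real.sqrt β : ℝ) : ℂ) * Complex.I) := by
    simp only [hE, hF]
    rw [mul_left_comm, ← Complex.exp_add]
    congr 2
    have h0 : ((Real.sqrt β : ℝ) : ℂ) ≠ 0 := by exact_mod_cast hr.ne'
    have hLc : (L : ℂ) ≠ 0 := by exact_mod_cast hL.ne'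
    have hsq : (β : ℂ) = ((Real.sqrt β : ℝ) : ℂ) ^ 2 := by
      exact_mod_cast (Real.sq_sqrt (by linarith)).symm
    simp only [hs]
    push_cast
    rw [hw, hsq]
    field_simp
    ring
  rw [e1, Complex.re_ofReal_mul, Complex.exp_re]
  simp only [Complex.add_re, Complex.add_im, Complex.ofReal_re, Complex.ofReal_im,
    Complex.re_ofReal_mul, Complex.im_ofReal_mul, Complex.I_re, Complex.I_im, mul_zero, mul_one,
    add_zero, zero_add]
  rw [Real.exp_add, ← Real.exp_nat_mul]
  have : ((n + 1 : ℕ) : ℝ) * -L = -(L * ((n : ℝ) + 1)) := by push_cast; ring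
  rw [this]
  ring
end
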